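/- For every w ∈ Λ, the number of ordered pairs (a,b) ∈ O₂ × O₄ with a + b = w equals 93150 if w ∈ O₂; 48600 if w ∈ O₃; 16192 if w ∈ O₄; 4050 if w ∈ O₅; 759 if w ∈ O_{6a}; 891 if w ∈ O_{6b}; 100 if w ∈ O₇; 8 if w ∈ O_{8b}; 1 if w ∈ O_{9a}; 1 if w ∈ O_{10b}; and 0 otherwise. Likewise, the number of ordered pairs (a,b) ∈ O₃ × O₃ with a + b = w equals 16773120 if w = 0; 953856 if w ∈ O₂; 257600 if w ∈ O₃; 64768 if w ∈ O₄; 14256 if w ∈ O₅; 2576 if w ∈ O_{6a}; 2816 if w ∈ O_{6b}; 352 if w ∈ O₇; 32 if w ∈ O_{8b}; 2 if w ∈ O_{9b}; 2 if w ∈ O_{10c}; 1 if w ∈ O_{12a}; and 0 otherwise. -/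

import Mathlib

open Complex Matrix UpperHalfPlane
open scoped Manifold MatrixGroups Real Topology BigOperators

noncomputable section

/-- Vectors of the rank-24 lattice (coordinates w.r.t. a fixed basis). -/
abbrev LV := Fin 24 → ℤ

/-- Complexified vectors. -/
abbrev CV := Fin 24 → ℂ

/-- The bilinear form attached to a Gram matrix `B`. -/
def pairZ (B : Matrix (Fin 24) (Fin 24) ℤ) (v u : LV) : ℤ := v ⬝ᵥ B.mulVec u

/-- The complex bilinear extension of the form. -/
def pairC (B : Matrix (Fin 24) (Fin 24) ℤ) (z w : CV) : ℂ :=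
  z ⬝ᵥ ((B.map (Int.cast : ℤ → ℂ)).mulVec w)

/-- Inclusion of lattice vectors into complexified vectors. -/
def liftC (v : LV) : CV := fun i => (v i : ℂ)

/-- `B` is a Gram matrix of the Leech lattice: even, unimodular, positive definite of
rank 24, with no vectors of norm 2 (no roots). -/
def IsLeech (B : Matrix (Fin 24) (Fin 24) ℤ) : Prop :=
  B.IsSymm ∧ B.det = 1 ∧ (∀ v : LV, v ≠ 0 → 0 < pairZ B v v) ∧
    (∀ v : LV, Even (pairZ B v v)) ∧ (∀ v : LV, pairZ B v v ≠ 2)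

/-- The automorphism group `Co₀ = Aut(Λ)` of the lattice, as a set of integral matrices. -/
def ConwayGroup (B : Matrix (Fin 24) (Fin 24) ℤ) : Set (Matrix (Fin 24) (Fin 24) ℤ) :=
  {σ | IsUnit σ.det ∧ σᵀ * B * σ = B}

/-- Action of an integral matrix on complexified vectors. -/
def actC (σ : Matrix (Fin 24) (Fin 24) ℤ) (z : CV) : CV :=
  (σ.map (Int.cast : ℤ → ℂ)).mulVec z

/-- `e(x) = exp(2πix)`. -/
def eC (x : ℂ) : ℂ := Complex.exp (2 * (Real.pi : ℂ) * Complex.I * x)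

/-- The Fourier term `qⁿ ζ^ℓ`. -/
def fterm (B : Matrix (Fin 24) (Fin 24) ℤ) (n : ℕ) (ℓ : LV) (τ : UpperHalfPlane) (z : CV) : ℂ :=
  eC ((n : ℂ) * (τ : ℂ)) * eC (pairC B (liftC ℓ) z)

/-- Lower-left entry of `A ∈ SL(2,ℤ)`, as a complex number. -/
def slc (A : SL(2, ℤ)) : ℂ := ((A : Matrix (Fin 2) (Fin 2) ℤ) 1 0 : ℤ)

/-- Lower-right entry of `A ∈ SL(2,ℤ)`, as a complex number. -/
def sld (A : SL(2, ℤ)) : ℂ := ((A : Matrix (Fin 2) (Fin 2) ℤ) 1 1 : ℤ)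

/-- The automorphy factor `cτ + d`. -/
def jfactor (A : SL(2, ℤ)) (τ : UpperHalfPlane) : ℂ := slc A * (τ : ℂ) + sld A

/-- `φ : ℍ × (Λ⊗ℂ) → ℂ` is a Conway invariant weak Jacobi form of weight `k` and index `t`
with Fourier coefficients `f`. -/
structure IsJacobiFormWith (B : Matrix (Fin 24) (Fin 24) ℤ) (k : ℤ) (t : ℕ)
    (φ : UpperHalfPlane → CV → ℂ) (f : ℕ → LV → ℂ) : Prop where
  holo_tau : ∀ z : CV, MDifferentiable 𝓘(ℂ) 𝓘(ℂ) fun τ : UpperHalfPlane => φ τ z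
  holo_z : ∀ τ : UpperHalfPlane, Differentiable ℂ (φ τ)
  conway_invar : ∀ σ ∈ ConwayGroup B, ∀ (τ : UpperHalfPlane) (z : CV), φ τ (actC σ z) = φ τ z
  quasi_periodic : ∀ (x y : LV) (τ : UpperHalfPlane) (z : CV),
    φ τ (z + (τ : ℂ) • liftC x + liftC y) =
      Complex.exp (-(t : ℂ) * (Real.pi : ℂ) * Complex.I * (pairZ B x x : ℂ) * (τ : ℂ)
        - 2 * (t : ℂ) * (Real.pi : ℂ) * Complex.I * pairC B (liftC x) z) * φ τ z
  modular : ∀ (A : SL(2, ℤ)) (τ : UpperHalfPlane) (z : CV),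
    φ (A • τ) ((jfactor A τ)⁻¹ • z) =
      (jfactor A τ) ^ k *
        Complex.exp ((t : ℂ) * (Real.pi : ℂ) * Complex.I * slc A * pairC B z z / jfactor A τ) *
        φ τ z
  expansion : ∀ (τ : UpperHalfPlane) (z : CV),
    HasSum (fun p : ℕ × LV => f p.1 p.2 * fterm B p.1 p.2 τ z) (φ τ z)

/-- Conway invariant weak Jacobi forms. -/
def IsWeakJacobiForm (B : Matrix (Fin 24) (Fin 24) ℤ) (k : ℤ) (t : ℕ)
    (φ : UpperHalfPlane → CV → ℂ) : Prop :=
  ∃ f, IsJacobiFormWith B k t φ f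

/-- Conway invariant holomorphic Jacobi forms. -/
def IsHolJacobiForm (B : Matrix (Fin 24) (Fin 24) ℤ) (k : ℤ) (t : ℕ)
    (φ : UpperHalfPlane → CV → ℂ) : Prop :=
  ∃ f, IsJacobiFormWith B k t φ f ∧
    ∀ (n : ℕ) (ℓ : LV), 2 * (n : ℤ) * t - pairZ B ℓ ℓ < 0 → f n ℓ = 0

/-- Modular forms of weight `k` on `SL₂(ℤ)`; the ring of all of them is `ℂ[E₄,E₆]`. -/
abbrev MForm (k : ℤ) := ModularForm (CongruenceSubgroup.Gamma 1) k

/-- The family `φ i` (of weights `w i`) freely generates the module of all forms satisfying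
`P` over the ring `M_*(SL₂(ℤ)) = ℂ[E₄,E₆]` of modular forms on `SL₂(ℤ)`. -/
def FreelyGenerates (P : ℤ → (UpperHalfPlane → CV → ℂ) → Prop) {n : ℕ}
    (w : Fin n → ℤ) (φ : Fin n → UpperHalfPlane → CV → ℂ) : Prop :=
  (∀ i, P (w i) (φ i)) ∧
  ∀ (k : ℤ) (ψ : UpperHalfPlane → CV → ℂ), P k ψ →
    ∃! g : (i : Fin n) → MForm (k - w i),
      ∀ (τ : UpperHalfPlane) (z : CV), ψ τ z = ∑ i, (g i) τ * φ i τ z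

/-- The point `(aτ+b)/d` of the upper half-plane (for `a, d > 0`). -/
def heckePt (a d b : ℕ) (τ : UpperHalfPlane) : UpperHalfPlane :=
  if h : 0 < ((((a : ℂ) * (τ : ℂ) + (b : ℂ)) / (d : ℂ)).im) then
    ⟨((a : ℂ) * (τ : ℂ) + (b : ℂ)) / (d : ℂ), h⟩ else τ

/-- The Hecke operator `T₋(m)` on Jacobi forms of weight `k`. -/
def heckeOp (k : ℤ) (m : ℕ) (φ : UpperHalfPlane → CV → ℂ) : UpperHalfPlane → CV → ℂ :=
  fun τ z => (m : ℂ)⁻¹ * ∑ d ∈ m.divisors, ∑ b ∈ Finset.range d,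
    ((m / d : ℕ) : ℂ) ^ k * φ (heckePt (m / d) d b τ) (((m / d : ℕ) : ℂ) • z)

/-- The Jacobi theta function `Θ_Λ = A₁` of the lattice. -/
def thetaLeech (B : Matrix (Fin 24) (Fin 24) ℤ) : UpperHalfPlane → CV → ℂ := fun τ z =>
  ∑' ℓ : LV, Complex.exp ((Real.pi : ℂ) * Complex.I * (pairZ B ℓ ℓ : ℂ) * (τ : ℂ)
    + 2 * (Real.pi : ℂ) * Complex.I * pairC B (liftC ℓ) z)

/-- `σ_k(n) = Σ_{d ∣ n} d^k`. -/
def sigmaNat (k n : ℕ) : ℕ := ∑ d ∈ n.divisors, d ^ k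

/-- `A_t = σ₁₁(t)⁻¹ (A₁ | T₋(t))`, a holomorphic Jacobi form of weight 12 and index `t`. -/
def Aform (B : Matrix (Fin 24) (Fin 24) ℤ) (t : ℕ) : UpperHalfPlane → CV → ℂ := fun τ z =>
  ((sigmaNat 11 t : ℂ))⁻¹ * heckeOp 12 t (thetaLeech B) τ z

/-- The quasimodular Eisenstein series `E₂`. -/
def E2 : UpperHalfPlane → ℂ := fun τ =>
  1 - 24 * ∑' n : ℕ, (sigmaNat 1 (n + 1) : ℂ) * eC (((n : ℂ) + 1) * (τ : ℂ))

/-- The discriminant cusp form `Δ(τ) = q ∏ (1-qⁿ)^24`. -/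
def DeltaForm : UpperHalfPlane → ℂ := fun τ =>
  eC (τ : ℂ) * ∏' n : ℕ, (1 - eC (((n : ℂ) + 1) * (τ : ℂ))) ^ 24

/-- `aτ`. -/
def scaleH (a : ℕ) (τ : UpperHalfPlane) : UpperHalfPlane := heckePt a 1 0 τ

/-- `(τ+j)/t`. -/
def sliceH (t j : ℕ) (τ : UpperHalfPlane) : UpperHalfPlane := heckePt 1 t j τ

/-- `f₂(τ) = (tE₂(tτ) - E₂(τ))/(t-1)`, a modular form of weight 2 on `Γ₀(t)`. -/
def f2w (t : ℕ) (τ : UpperHalfPlane) : ℂ := ((t : ℂ) * E2 (scaleH t τ) - E2 τ) / ((t : ℂ) - 1)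

/-- `B_t`, a holomorphic Jacobi form of weight 14 and index `t` (for `t` prime). -/
def Bform (B : Matrix (Fin 24) (Fin 24) ℤ) (t : ℕ) : UpperHalfPlane → CV → ℂ := fun τ z =>
  ((t : ℂ) ^ 12 / ((t : ℂ) ^ 12 - 1)) *
    (f2w t τ * thetaLeech B (scaleH t τ) ((t : ℂ) • z)
      - (t : ℂ) ^ (-13 : ℤ) *
        ∑ j ∈ Finset.range t, f2w t (sliceH t j τ) * thetaLeech B (sliceH t j τ) z)

/-- Fourier coefficients of `E₂`. -/
def e2coeff : ℕ → ℂ := fun m => if m = 0 then 1 else -24 * (sigmaNat 1 m : ℂ)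

/-- Fourier coefficients of the image `H_k(φ)` of the modified heat operator applied to a
Jacobi form of weight `k` and index `t` with Fourier coefficients `f`:
`H_k(φ) = 𝓗(φ) + ((12-k)/12)E₂φ` where `𝓗` multiplies `f(n,ℓ)` by `n - (ℓ,ℓ)/(2t)`. -/
def heatCoeff (B : Matrix (Fin 24) (Fin 24) ℤ) (k : ℤ) (t : ℕ) (f : ℕ → LV → ℂ) :
    ℕ → LV → ℂ := fun n ℓ =>
  ((n : ℂ) - (pairZ B ℓ ℓ : ℂ) / (2 * (t : ℂ))) * f n ℓ +
    ((12 - k : ℤ) : ℂ) / 12 * ∑ m ∈ Finset.range (n + 1), e2coeff m * f (n - m) ℓ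

/-- The function with Fourier coefficients `f`. -/
def fourierSeries (B : Matrix (Fin 24) (Fin 24) ℤ) (f : ℕ → LV → ℂ) :
    UpperHalfPlane → CV → ℂ := fun τ z =>
  ∑' p : ℕ × LV, f p.1 p.2 * fterm B p.1 p.2 τ z

/-- The family `Φ m = Φ_{12,m}` of Fourier–Jacobi coefficients of the Borcherds form `Φ₁₂`
at the Leech cusp:
`Δ(τ)·exp(−Σ_{m≥1}((Δ⁻¹A₁)|T₋(m))(τ,𝔷)e^{2πimω}) = Σ_{m≥0} Φ_{12,m}(τ,𝔷)e^{2πimω}`. -/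
def IsFJExpansionOfPhi12 (B : Matrix (Fin 24) (Fin 24) ℤ)
    (Φ : ℕ → UpperHalfPlane → CV → ℂ) : Prop :=
  ∀ (τ ω : UpperHalfPlane) (z : CV),
    HasSum (fun m : ℕ => Φ m τ z * eC ((m : ℂ) * (ω : ℂ)))
      (DeltaForm τ * Complex.exp
        (- ∑' m : ℕ, heckeOp 0 (m + 1) (fun σ w => thetaLeech B σ w / DeltaForm σ) τ z *
            eC (((m : ℂ) + 1) * (ω : ℂ))))

/-- `S_t`: the set of lattice vectors of minimal norm in their coset modulo `tΛ`. -/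
def minimalSet (B : Matrix (Fin 24) (Fin 24) ℤ) (t : ℕ) : Set LV :=
  {v | ∀ u : LV, (∃ w : LV, u = v + (t : ℤ) • w) → pairZ B v v ≤ pairZ B u u}

/-- `v` and `u` are conjugate modulo `tΛ` up to the Conway group. -/
def conjModT (B : Matrix (Fin 24) (Fin 24) ℤ) (t : ℕ) (v u : LV) : Prop :=
  ∃ σ ∈ ConwayGroup B, ∃ w : LV, v - σ.mulVec u = (t : ℤ) • w

/-- `s(t) = |(S_t/Co₀)/tΛ|`. -/
def sRank (B : Matrix (Fin 24) (Fin 24) ℤ) (t : ℕ) : ℕ :=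
  Nat.card (Quot (fun v u : minimalSet B t => conjModT B t v.1 u.1))

/-- `R` is a system of representatives for `(S_t/Co₀)/tΛ` (of minimal length). -/
def IsRepSystem (B : Matrix (Fin 24) (Fin 24) ℤ) (t : ℕ) (R : Finset LV) : Prop :=
  (↑R ⊆ minimalSet B t) ∧ ∀ v ∈ minimalSet B t, ∃! r, r ∈ R ∧ conjModT B t v r

/-- The Conway orbit of a lattice vector. -/
def orbitOf (B : Matrix (Fin 24) (Fin 24) ℤ) (v : LV) : Set LV :=
  {u | ∃ σ ∈ ConwayGroup B, u = σ.mulVec v}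

/-- `O` is a Conway orbit of Leech vectors of type `x` (i.e. norm `2x`) with `c` elements. -/
def OrbitData (B : Matrix (Fin 24) (Fin 24) ℤ) (O : Set LV) (x c : ℕ) : Prop :=
  (∃ v : LV, O = orbitOf B v) ∧ (∀ v ∈ O, pairZ B v v = 2 * (x : ℤ)) ∧ Nat.card O = c

/-- `W` is a `d`-dimensional subspace of the space of functions `ℍ × (Λ⊗ℂ) → ℂ`. -/
def SpanDimIs (W : (UpperHalfPlane → CV → ℂ) → Prop) (d : ℕ) : Prop :=
  ∃ φ : Fin d → UpperHalfPlane → CV → ℂ, (∀ i, W (φ i)) ∧ LinearIndependent ℂ φ ∧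
    ∀ ψ, W ψ → ∃ c : Fin d → ℂ, ψ = ∑ i, c i • φ i


section basics
variable {B : Matrix (Fin 24) (Fin 24) ℤ}

lemma ip_add_left (u v w : LV) : pairZ B (u + v) w = pairZ B u w + pairZ B v w := by
  simp [pairZ, add_dotProduct]
lemma ip_add_right (u v w : LV) : pairZ B u (v + w) = pairZ B u v + pairZ B u w := by
  simp [pairZ, mulVec_add]
lemma ip_neg_left (u v : LV) : pairZ B (-u) v = -pairZ B u v := by
  simp [pairZ]
lemma ip_neg_right (u v : LV) : pairZ B u (-v) = -pairZ B u v := by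
  simp [pairZ, mulVec_neg]
lemma ip_sub_left (u v w : LV) : pairZ B (u - v) w = pairZ B u w - pairZ B v w := by
  rw [sub_eq_add_neg, ip_add_left, ip_neg_left, sub_eq_add_neg]
lemma ip_sub_right (u v w : LV) : pairZ B u (v - w) = pairZ B u v - pairZ B u w := by
  rw [sub_eq_add_neg, ip_add_right, ip_neg_right, sub_eq_add_neg]
lemma ip_smul_left (c : ℤ) (u v : LV) : pairZ B (c • u) v = c * pairZ B u v := by
  unfold pairZ; rw [smul_dotProduct]; rfl
lemma ip_smul_right (c : ℤ) (u v : LV) : pairZ B u (c • v) = c * pairZ B u v := by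
  unfold pairZ; rw [mulVec_smul, dotProduct_smul]; rfl
lemma ip_zero_left (v : LV) : pairZ B 0 v = 0 := by simp [pairZ]
lemma ip_zero_right (v : LV) : pairZ B v 0 = 0 := by simp [pairZ]

lemma ip_comm (hB : IsLeech B) (u v : LV) : pairZ B u v = pairZ B v u := by
  unfold pairZ
  rw [dotProduct_mulVec, ← mulVec_transpose, hB.1, dotProduct_comm]

lemma ip_sum_left {ι : Type*} (s : Finset ι) (f : ι → LV) (v : LV) :
    pairZ B (∑ i ∈ s, f i) v = ∑ i ∈ s, pairZ B (f i) v := by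
  classical
  induction s using Finset.induction_on with
  | empty => simp [ip_zero_left]
  | insert a s ha ih => rw [Finset.sum_insert ha, Finset.sum_insert ha, ip_add_left, ih]

/-- The type of a vector. -/
def ty (B : Matrix (Fin 24) (Fin 24) ℤ) (v : LV) : ℤ := pairZ B v v / 2

lemma two_ty (hB : IsLeech B) (v : LV) : pairZ B v v = 2 * ty B v := by
  have := hB.2.2.2.1 v
  unfold ty
  obtain ⟨r, hr⟩ := this
  omega

lemma ty_add (hB : IsLeech B) (u v : LV) : ty B (u + v) = ty B u + ty B v + pairZ B u v := by
  have h1 := two_ty hB (u + v)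
  have h2 := two_ty hB u
  have h3 := two_ty hB v
  have h4 := ip_comm hB u v
  rw [ip_add_left, ip_add_right, ip_add_right] at h1
  linarith

lemma ty_sub (hB : IsLeech B) (u v : LV) : ty B (u - v) = ty B u + ty B v - pairZ B u v := by
  have h1 := two_ty hB (u - v)
  have h2 := two_ty hB u
  have h3 := two_ty hB v
  have h4 := ip_comm hB u v
  rw [ip_sub_left, ip_sub_right, ip_sub_right] at h1
  linarith

lemma ty_neg (u : LV) : ty B (-u) = ty B u := by
  unfold ty; rw [ip_neg_left, ip_neg_right, neg_neg]

lemma ty_two (hB : IsLeech B) (u : LV) : ty B ((2 : ℤ) • u) = 4 * ty B u := by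
  have h1 := two_ty hB ((2 : ℤ) • u)
  have h2 := two_ty hB u
  rw [ip_smul_left, ip_smul_right] at h1
  linarith

lemma ty_zero : ty B 0 = 0 := by unfold ty; rw [ip_zero_left]; rfl

lemma ty_min (hB : IsLeech B) (v : LV) : v = 0 ∨ 2 ≤ ty B v := by
  by_cases h : v = 0
  · exact Or.inl h
  · right
    have h1 := hB.2.2.1 v h
    have h2 := hB.2.2.2.2 v
    have h3 := two_ty hB v
    omega

lemma ty_eq_zero (hB : IsLeech B) {v : LV} (h : ty B v < 2) : v = 0 := by
  rcases ty_min hB v with h1 | h1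
  · exact h1
  · omega

/-- Vectors of given type. -/
def Lam (B : Matrix (Fin 24) (Fin 24) ℤ) (k : ℤ) : Set LV := {v | ty B v = k}

/-- Congruence modulo `2Λ`. -/
def cg (u v : LV) : Prop := ∃ x : LV, u = v + (2 : ℤ) • x

lemma cg_refl (u : LV) : cg u u := ⟨0, by simp⟩
lemma cg_symm {u v : LV} (h : cg u v) : cg v u := by
  obtain ⟨x, hx⟩ := h
  exact ⟨-x, by rw [hx]; simp⟩
lemma cg_trans {u v w : LV} (h : cg u v) (h' : cg v w) : cg u w := by
  obtain ⟨x, hx⟩ := h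
  obtain ⟨y, hy⟩ := h'
  exact ⟨y + x, by rw [hx, hy, smul_add, add_assoc]⟩
lemma cg_neg {u v : LV} (h : cg u v) : cg (-u) v := by
  obtain ⟨x, hx⟩ := h
  refine ⟨-v - x, ?_⟩
  rw [hx]; ext i; simp; ring
lemma cg_neg' {u v : LV} : cg (-u) v ↔ cg u v :=
  ⟨fun h => by simpa using cg_neg h, cg_neg⟩

/-- The class modulo `2Λ`. -/
def cls (v : LV) : Fin 24 → ZMod 2 := fun i => (v i : ZMod 2)

lemma cls_eq {u v : LV} : cls u = cls v ↔ cg u v := by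
  constructor
  · intro h
    have : ∀ i, ∃ x : ℤ, u i = v i + 2 * x := by
      intro i
      have := congrFun h i
      simp only [cls] at this
      rw [ZMod.intCast_eq_intCast_iff_dvd_sub] at this
      obtain ⟨c, hc⟩ := this
      exact ⟨-c, by push_cast at hc; linarith⟩
    choose x hx using this
    exact ⟨x, by ext i; simp [hx]⟩
  · rintro ⟨x, hx⟩
    ext i
    have : (2 : ZMod 2) = 0 := by decide
    simp [cls, hx, this]

lemma cls_surj (x : Fin 24 → ZMod 2) : ∃ v : LV, cls v = x :=
  ⟨fun i => ((x i).val : ℤ), by ext i; simp [cls]⟩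

lemma cls_add (u v : LV) : cls (u + v) = cls u + cls v := by ext i; simp [cls]

lemma cls_card : Nat.card (Fin 24 → ZMod 2) = 16777216 := by
  simp [Nat.card_eq_fintype_card]

lemma cg_parity {u v : LV} (h : cg u v) (a : LV) :
    ∃ r, pairZ B a u = pairZ B a v + 2 * r := by
  obtain ⟨x, rfl⟩ := h
  exact ⟨pairZ B a x, by rw [ip_add_right, ip_smul_right]⟩

lemma cg_ty (hB : IsLeech B) {u v : LV} (h : cg u v) : ∃ r, ty B u = ty B v + 2 * r := by
  obtain ⟨x, rfl⟩ := h
  exact ⟨2 * ty B x + pairZ B v x, by rw [ty_add hB, ip_smul_right, ty_two hB]; ring⟩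

/-- halves of congruent vectors -/
lemma cg_half (hB : IsLeech B) {s w : LV} (h : cg s w) :
    ∃ a b : LV, s + w = (2 : ℤ) • a ∧ w = a + b ∧ s = a - b ∧
      4 * ty B a = ty B s + ty B w + pairZ B s w ∧
      4 * ty B b = ty B s + ty B w - pairZ B s w := by
  obtain ⟨x, hx⟩ := h
  have e1 : s + w = (2 : ℤ) • (w + x) := by rw [hx]; ext i; simp; ring
  have e2 : s - w = (2 : ℤ) • x := by rw [hx]; ext i; simp
  refine ⟨w + x, -x, e1, by simp, by rw [hx]; ext i; simp; ring, ?_, ?_⟩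
  · rw [← ty_two hB, ← e1, ty_add hB]
  · rw [ty_neg, ← ty_two hB, ← e2, ty_sub hB]

lemma half_cases (hB : IsLeech B) {s w : LV} (h : cg s w) (h1 : s ≠ w) (h2 : s ≠ -w) :
    ∃ α β : ℤ, 2 ≤ α ∧ 2 ≤ β ∧ 4 * α = ty B s + ty B w + pairZ B s w ∧
      4 * β = ty B s + ty B w - pairZ B s w := by
  obtain ⟨a, b, e1, e2, e3, e4, e5⟩ := cg_half hB h
  refine ⟨ty B a, ty B b, ?_, ?_, e4, e5⟩
  · rcases ty_min hB a with h | h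
    · exfalso; apply h2; rw [e2, e3, h]; simp
    · exact h
  · rcases ty_min hB b with h | h
    · exfalso; apply h1; rw [e2, e3, h]; simp
    · exact h

lemma short_cg (hB : IsLeech B) {u v : LV} (h : cg u v) (hu : ty B u ≤ 4) (hv : ty B v ≤ 4) :
    u = v ∨ u = -v ∨ (ty B u = 4 ∧ ty B v = 4 ∧ pairZ B u v = 0) := by
  by_cases h1 : u = v
  · exact Or.inl h1
  by_cases h2 : u = -v
  · exact Or.inr (Or.inl h2)
  right; right
  obtain ⟨α, β, ha, hb, h3, h4⟩ := half_cases hB h h1 h2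
  refine ⟨by omega, by omega, by omega⟩

/-- Orthogonal frames: Parseval. -/
lemma parseval (hB : IsLeech B) (H : Finset LV) (hc : H.card = 24)
    (hn : ∀ f ∈ H, ty B f = 4) (ho : ∀ f ∈ H, ∀ g ∈ H, f ≠ g → pairZ B f g = 0) (u v : LV) :
    ∑ f ∈ H, pairZ B f u * pairZ B f v = 8 * pairZ B u v := by
  classical
  let e : Fin 24 ≃ H := (Fintype.equivFinOfCardEq (by simp [hc])).symm
  let F : Matrix (Fin 24) (Fin 24) ℤ := fun i => (e i : LV)
  have h1 : F * B * Fᵀ = (8 : ℤ) • (1 : Matrix (Fin 24) (Fin 24) ℤ) := by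
    ext i j
    have : (F * B * Fᵀ) i j = pairZ B (e i) (e j) := by
      unfold pairZ
      rw [dotProduct_mulVec]
      rfl
    rw [this]
    by_cases hij : i = j
    · subst hij
      rw [two_ty hB, hn _ (e i).2]; simp
    · rw [ho _ (e i).2 _ (e j).2 (fun h => hij (e.injective (Subtype.ext h)))]
      simp [hij]
  have h2 : Fᵀ * F * B = (8 : ℤ) • (1 : Matrix (Fin 24) (Fin 24) ℤ) := by
    have c : Function.Injective (fun M : Matrix (Fin 24) (Fin 24) ℤ => M.map (Int.cast : ℤ → ℚ)) := by
      intro M N h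
      ext i j
      have := congrFun (congrFun h i) j
      simpa using this
    apply c
    have h1' := congrArg (fun M : Matrix (Fin 24) (Fin 24) ℤ => M.map (Int.castRingHom ℚ)) h1
    simp only [Matrix.map_mul] at h1'
    have k : ((8 : ℤ) • (1 : Matrix (Fin 24) (Fin 24) ℤ)).map (Int.castRingHom ℚ) = (8 : ℚ) • (1 : Matrix (Fin 24) (Fin 24) ℚ) := by
      ext i j
      rw [Matrix.map_apply, Matrix.smul_apply, Matrix.smul_apply, Matrix.one_apply, Matrix.one_apply]
      split_ifs <;> simp
    rw [k] at h1'
    change (Fᵀ * F * B).map (Int.castRingHom ℚ) = ((8 : ℤ) • (1 : Matrix (Fin 24) (Fin 24) ℤ)).map (Int.castRingHom ℚ)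
    rw [k, Matrix.map_mul, Matrix.map_mul]
    set F' := F.map (Int.castRingHom ℚ)
    set G' := Fᵀ.map (Int.castRingHom ℚ)
    set B' := B.map (Int.castRingHom ℚ)
    have h3 : (F' * B') * ((1/8 : ℚ) • G') = 1 := by
      rw [Matrix.mul_smul, h1', smul_smul]; norm_num
    have h4 := mul_eq_one_comm.mp h3
    rw [Matrix.smul_mul, ← Matrix.mul_assoc] at h4
    rw [← h4, smul_smul]; norm_num
  have h3 : (Fᵀ * F * B) *ᵥ v = (8 : ℤ) • v := by rw [h2]; simp [smul_mulVec]
  have h4 : pairZ B u ((Fᵀ * F * B) *ᵥ v) = 8 * pairZ B u v := by rw [h3, ip_smul_right]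
  rw [← h4, ← Finset.sum_coe_sort, ← e.sum_comp]
  have h5 : ∀ i x, pairZ B (e i) x = (F *ᵥ (B *ᵥ x)) i := fun i x => rfl
  simp only [h5]
  rw [ip_comm hB]
  unfold pairZ
  rw [← Matrix.mulVec_mulVec, ← Matrix.mulVec_mulVec, dotProduct_comm, dotProduct_mulVec, vecMul_transpose]
  simp only [dotProduct]

lemma frame_le (hB : IsLeech B) (H : Finset LV) 
    (hn : ∀ f ∈ H, ty B f = 4) (ho : ∀ f ∈ H, ∀ g ∈ H, f ≠ g → pairZ B f g = 0) :
    H.card ≤ 24 := by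
  classical
  by_contra hc
  obtain ⟨K, hK, hKc⟩ := Finset.exists_subset_card_eq (show 24 ≤ H.card by omega)
  have : ∃ g ∈ H, g ∉ K := by
    by_contra hh
    push Not at hh
    have := Finset.card_le_card (show H ⊆ K from hh)
    omega
  obtain ⟨g, hg, hgK⟩ := this
  have h1 := parseval hB K hKc (fun f hf => hn f (hK hf))
    (fun f hf g hg => ho f (hK hf) g (hK hg)) g g
  rw [Finset.sum_eq_zero, two_ty hB, hn g hg] at h1
  · norm_num at h1
  · intro f hf
    rw [ho f (hK hf) g hg (fun h => hgK (h ▸ hf))]; simp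

/-- a sign choice -/
def pos (v : LV) : Prop := 0 < toLex v

lemma pos_or {v : LV} (h : v ≠ 0) : pos v ∨ pos (-v) := by
  unfold pos
  rcases lt_trichotomy 0 (toLex v) with h1 | h1 | h1
  · exact Or.inl h1
  · exact absurd h1.symm h
  · right
    change 0 < - toLex v
    exact neg_pos.mpr h1

lemma not_pos_both {v : LV} (h : pos v) : ¬ pos (-v) := by
  intro h'
  unfold pos at h h'
  have : 0 < - toLex v := h'
  have := neg_pos.mp this
  exact absurd h (not_lt.mpr this.le)

/-- double counting. -/
lemma dc {α β : Type*} {X : Set α} {Y : Set β} (hX : X.Finite) (hY : Y.Finite) (R : α → β → Prop)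
    {m n : ℕ} (h1 : ∀ x ∈ X, {y | y ∈ Y ∧ R x y}.ncard = m)
    (h2 : ∀ y ∈ Y, {x | x ∈ X ∧ R x y}.ncard = n) : X.ncard * m = Y.ncard * n := by
  classical
  have := Finset.card_mul_eq_card_mul (s := hX.toFinset) (t := hY.toFinset) R (m := m) (n := n) ?_ ?_
  · rwa [← Set.ncard_eq_toFinset_card _ hX, ← Set.ncard_eq_toFinset_card _ hY] at this
  · intro a ha
    rw [← h1 a (by simpa using ha), ← Set.ncard_coe_finset]
    congr 1; ext y; simp [Finset.bipartiteAbove]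
  · intro b hb
    rw [← h2 b (by simpa using hb), ← Set.ncard_coe_finset]
    congr 1; ext y; simp [Finset.bipartiteBelow]

lemma dc_le {α β : Type*} {X : Set α} {Y : Set β} (hX : X.Finite) (hY : Y.Finite) (R : α → β → Prop)
    {m n : ℕ} (h1 : ∀ x ∈ X, m ≤ {y | y ∈ Y ∧ R x y}.ncard)
    (h2 : ∀ y ∈ Y, {x | x ∈ X ∧ R x y}.ncard ≤ n) : X.ncard * m ≤ Y.ncard * n := by
  classical
  have := Finset.card_mul_le_card_mul (s := hX.toFinset) (t := hY.toFinset) R (m := m) (n := n) ?_ ?_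
  · rwa [← Set.ncard_eq_toFinset_card _ hX, ← Set.ncard_eq_toFinset_card _ hY] at this
  · intro a ha
    refine (h1 a (by simpa using ha)).trans (le_of_eq ?_)
    rw [← Set.ncard_coe_finset]
    congr 1; ext y; simp [Finset.bipartiteAbove]
  · intro b hb
    refine le_trans (le_of_eq ?_) (h2 b (by simpa using hb))
    rw [← Set.ncard_coe_finset]
    congr 1; ext y; simp [Finset.bipartiteBelow]

/-- isometries -/
def IsIso (B : Matrix (Fin 24) (Fin 24) ℤ) (e : LV ≃+ LV) : Prop :=
  ∀ x y, pairZ B (e x) (e y) = pairZ B x y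

lemma iso_ty {e : LV ≃+ LV} (he : IsIso B e) (v : LV) : ty B (e v) = ty B v := by
  unfold ty; rw [he]

lemma iso_cg {e : LV ≃+ LV} {u v : LV} : cg (e u) (e v) ↔ cg u v := by
  constructor
  · rintro ⟨x, hx⟩
    refine ⟨e.symm x, e.injective ?_⟩
    rw [hx, map_add, map_zsmul, e.apply_symm_apply]
  · rintro ⟨x, hx⟩
    exact ⟨e x, by rw [hx, map_add, map_zsmul]⟩

lemma conway_pair {σ : Matrix (Fin 24) (Fin 24) ℤ} (h : σ ∈ ConwayGroup B) (x y : LV) :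
    pairZ B (σ *ᵥ x) (σ *ᵥ y) = pairZ B x y := by
  have := h.2
  unfold pairZ
  conv_rhs => rw [← this]
  rw [← Matrix.mulVec_mulVec, ← Matrix.mulVec_mulVec, dotProduct_mulVec x, vecMul_transpose]

lemma conway_mul {σ ρ : Matrix (Fin 24) (Fin 24) ℤ} (h : σ ∈ ConwayGroup B)
    (h' : ρ ∈ ConwayGroup B) : σ * ρ ∈ ConwayGroup B := by
  refine ⟨by rw [det_mul]; exact h.1.mul h'.1, ?_⟩
  have e1 := h.2
  calc (σ * ρ)ᵀ * B * (σ * ρ) = ρᵀ * (σᵀ * B * σ) * ρ := by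
        rw [transpose_mul]; simp only [Matrix.mul_assoc]
    _ = B := by rw [e1, h'.2]

lemma conway_inv {σ : Matrix (Fin 24) (Fin 24) ℤ} (h : σ ∈ ConwayGroup B) :
    σ⁻¹ ∈ ConwayGroup B := by
  have h1 : σ * σ⁻¹ = 1 := Matrix.mul_nonsing_inv σ h.1
  have h2 : (σ⁻¹)ᵀ * σᵀ = 1 := by rw [← transpose_mul, h1, transpose_one]
  refine ⟨?_, ?_⟩
  · have := congrArg det h1
    rw [det_mul, det_one] at this
    exact IsUnit.of_mul_eq_one _ (by rw [mul_comm]; exact this)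
  · conv_lhs => rw [← h.2]
    calc (σ⁻¹)ᵀ * (σᵀ * B * σ) * σ⁻¹ = ((σ⁻¹)ᵀ * σᵀ) * B * (σ * σ⁻¹) := by
          simp only [Matrix.mul_assoc]
      _ = B := by rw [h1, h2]; simp

lemma conway_neg : (-1 : Matrix (Fin 24) (Fin 24) ℤ) ∈ ConwayGroup B := by
  refine ⟨?_, by simp⟩
  rw [det_neg]; simp

/-- the isometry of a Conway matrix -/
lemma conway_iso {σ : Matrix (Fin 24) (Fin 24) ℤ} (h : σ ∈ ConwayGroup B) :
    ∃ e : LV ≃+ LV, IsIso B e ∧ ∀ v, e v = σ *ᵥ v := by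
  have h1 : σ * σ⁻¹ = 1 := Matrix.mul_nonsing_inv σ h.1
  have h2 : σ⁻¹ * σ = 1 := Matrix.nonsing_inv_mul σ h.1
  exact ⟨{ toFun := fun v => σ *ᵥ v
           invFun := fun v => σ⁻¹ *ᵥ v
           left_inv := fun v => by simp [Matrix.mulVec_mulVec, h2]
           right_inv := fun v => by simp [Matrix.mulVec_mulVec, h1]
           map_add' := fun u v => mulVec_add σ u v }, fun x y => conway_pair h x y, fun v => rfl⟩

/-- abstract orbit properties -/
structure Orb (B : Matrix (Fin 24) (Fin 24) ℤ) (O : Set LV) (k : ℤ) (c : ℕ) : Prop where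
  sub : O ⊆ Lam B k
  card : O.ncard = c
  tr : ∀ u ∈ O, ∀ v ∈ O, ∃ e : LV ≃+ LV, IsIso B e ∧ e u = v
  neg : ∀ u ∈ O, -u ∈ O
  ne : O.Nonempty
  uniq : ∀ O' : Set LV, (∃ v, O' = orbitOf B v) → (∃ u, u ∈ O ∧ u ∈ O') → O' = O
  orb : ∃ v, O = orbitOf B v

lemma orb_of {O : Set LV} {k c : ℕ} (h : OrbitData B O k c) (hB : IsLeech B) :
    Orb B O k c := by
  obtain ⟨⟨r, hr⟩, h2, h3⟩ := h
  have hmem : ∀ (r u : LV), u ∈ orbitOf B r → orbitOf B u = orbitOf B r := by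
    rintro r u ⟨σ, hσ, rfl⟩
    ext x
    constructor
    · rintro ⟨ρ, hρ, rfl⟩
      exact ⟨ρ * σ, conway_mul hρ hσ, by rw [Matrix.mulVec_mulVec]⟩
    · rintro ⟨ρ, hρ, rfl⟩
      refine ⟨ρ * σ⁻¹, conway_mul hρ (conway_inv hσ), ?_⟩
      rw [Matrix.mulVec_mulVec, Matrix.mul_assoc, Matrix.nonsing_inv_mul σ hσ.1, Matrix.mul_one]
  refine ⟨?_, h3, ?_, ?_, ?_, ?_, ⟨r, hr⟩⟩
  · intro v hv
    have := h2 v hv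
    have h4 := two_ty hB v
    show ty B v = k
    omega
  · intro u hu v hv
    rw [hr] at hu hv
    rw [← hmem r u hu] at hv
    obtain ⟨σ, hσ, rfl⟩ := hv
    obtain ⟨e, he, hee⟩ := conway_iso hσ
    exact ⟨e, he, hee u⟩
  · intro u hu
    rw [hr] at hu ⊢
    rw [← hmem r u hu]
    exact ⟨-1, conway_neg, by rw [neg_mulVec, one_mulVec]⟩
  · exact ⟨r, by rw [hr]; exact ⟨1, ⟨by simp, by simp⟩, by rw [one_mulVec]⟩⟩
  · rintro O' ⟨r', hr'⟩ ⟨u, hu, hu'⟩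
    rw [hr'] at hu' ⊢
    rw [hr] at hu ⊢
    rw [← hmem _ _ hu, hmem _ _ hu']

lemma Orb.fin {O : Set LV} {k : ℤ} {c : ℕ} (h : Orb B O k c) (hc : c ≠ 0) : O.Finite := by
  apply Set.finite_of_ncard_ne_zero
  rw [h.card]; exact hc

end basics


section structure_facts
variable {B : Matrix (Fin 24) (Fin 24) ℤ}

lemma ty4_ne {f : LV} (h : ty B f = 4) : f ≠ 0 := by
  rintro rfl
  rw [ty_zero] at h; norm_num at h

lemma fr_orth (hB : IsLeech B) {f g : LV} (hf : ty B f = 4) (hg : ty B g = 4) (h : cg f g)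
    (h1 : f ≠ g) (h2 : f ≠ -g) : pairZ B f g = 0 := by
  rcases short_cg hB h (by omega) (by omega) with h3 | h3 | h3
  · exact absurd h3 h1
  · exact absurd h3 h2
  · exact h3.2.2

lemma fr_split (hB : IsLeech B) (S : Finset LV) (hS : ∀ f ∈ S, ty B f = 4)
    (hc : ∀ f ∈ S, ∀ g ∈ S, cg f g) (P : LV → Prop) [DecidablePred P]
    (hP : ∀ f ∈ S, P f → ¬ P (-f)) :
    (∀ f ∈ S.filter P, ty B f = 4) ∧
      (∀ f ∈ S.filter P, ∀ g ∈ S.filter P, f ≠ g → pairZ B f g = 0) := by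
  refine ⟨fun f hf => hS f (Finset.mem_filter.mp hf).1, ?_⟩
  intro f hf g hg hne
  rw [Finset.mem_filter] at hf hg
  refine fr_orth hB (hS f hf.1) (hS g hg.1) (hc f hf.1 g hg.1) hne ?_
  rintro rfl
  exact hP g hg.1 hg.2 hf.2

lemma fr_le (hB : IsLeech B) (S : Finset LV) (hS : ∀ f ∈ S, ty B f = 4)
    (hc : ∀ f ∈ S, ∀ g ∈ S, cg f g) : S.card ≤ 48 := by
  classical
  obtain ⟨a1, a2⟩ := fr_split hB S hS hc pos (fun f _ h => not_pos_both h)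
  obtain ⟨b1, b2⟩ := fr_split hB S hS hc (fun f => ¬ pos f)
    (fun f hf h => by simpa using (pos_or (ty4_ne (hS f hf))).resolve_left h)
  have h1 := frame_le hB _ a1 a2
  have h2 := frame_le hB _ b1 b2
  have := Finset.card_filter_add_card_filter_not (s := S) pos
  omega

lemma fr_parseval (hB : IsLeech B) (S : Finset LV) (hS : ∀ f ∈ S, ty B f = 4)
    (hc : ∀ f ∈ S, ∀ g ∈ S, cg f g) (hcard : S.card = 48) (u v : LV) :
    ∑ f ∈ S, pairZ B f u * pairZ B f v = 16 * pairZ B u v := by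
  classical
  obtain ⟨a1, a2⟩ := fr_split hB S hS hc pos (fun f _ h => not_pos_both h)
  obtain ⟨b1, b2⟩ := fr_split hB S hS hc (fun f => ¬ pos f)
    (fun f hf h => by simpa using (pos_or (ty4_ne (hS f hf))).resolve_left h)
  have h1 := frame_le hB _ a1 a2
  have h2 := frame_le hB _ b1 b2
  have := Finset.card_filter_add_card_filter_not (s := S) pos
  have p1 := parseval hB _ (by omega) a1 a2 u v
  have p2 := parseval hB _ (by omega) b1 b2 u v
  rw [← Finset.sum_filter_add_sum_filter_not S pos, p1, p2]
  ring

/-- The derived structure of the lattice. -/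
structure Good (B : Matrix (Fin 24) (Fin 24) ℤ) : Prop where
  L : IsLeech B
  fin : ∀ k, (Lam B k).Finite
  n2 : (Lam B 2).ncard = 196560
  n3 : (Lam B 3).ncard = 16773120
  n4 : (Lam B 4).ncard = 398034000
  t2 : ∀ u ∈ Lam B 2, ∀ v ∈ Lam B 2, ∃ e : LV ≃+ LV, IsIso B e ∧ e u = v
  t3 : ∀ u ∈ Lam B 3, ∀ v ∈ Lam B 3, ∃ e : LV ≃+ LV, IsIso B e ∧ e u = v
  t4 : ∀ u ∈ Lam B 4, ∀ v ∈ Lam B 4, ∃ e : LV ≃+ LV, IsIso B e ∧ e u = v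
  cl : ∀ v, ∃ s, cg s v ∧ (s = 0 ∨ ty B s = 2 ∨ ty B s = 3 ∨ ty B s = 4)
  fr : ∀ f, ty B f = 4 → {g | ty B g = 4 ∧ cg g f}.ncard = 48

lemma fib_le2 (hB : IsLeech B) {O : Set LV} {k : ℤ} (hO : O ⊆ Lam B k) (hk : k < 4)
    (x : Fin 24 → ZMod 2) : {v | v ∈ O ∧ cls v = x}.ncard ≤ 2 := by
  by_cases h : ∃ u, u ∈ O ∧ cls u = x
  · obtain ⟨u, hu, hx⟩ := h
    have hu' : ty B u = k := hO hu
    calc _ ≤ ({u, -u} : Set LV).ncard := by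
          apply Set.ncard_le_ncard _ (Set.toFinite _)
          rintro v ⟨hv, hvx⟩
          have hv' : ty B v = k := hO hv
          rcases short_cg hB (cls_eq.mp (hvx.trans hx.symm)) (by omega) (by omega) with h | h | h
          · simp [h]
          · simp [h]
          · omega
      _ ≤ 2 := Set.ncard_insert_le _ _ |>.trans (by simp)
  · push Not at h
    rw [show {v | v ∈ O ∧ cls v = x} = ∅ from by
      ext v; simp only [Set.mem_setOf_eq, Set.mem_empty_iff_false, iff_false]; exact fun hh => h v hh.1 hh.2]
    simp

lemma fib_le48 (hB : IsLeech B) {O : Set LV} (hO : O ⊆ Lam B 4) (hf : O.Finite)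
    (x : Fin 24 → ZMod 2) : {v | v ∈ O ∧ cls v = x}.ncard ≤ 48 := by
  have hf' : {v | v ∈ O ∧ cls v = x}.Finite := hf.subset (fun v hv => hv.1)
  rw [Set.ncard_eq_toFinset_card _ hf']
  apply fr_le hB
  · intro f hf; simp at hf; exact hO hf.1
  · intro f hf g hg; simp at hf hg; exact cls_eq.mp (hf.2.trans hg.2.symm)

lemma img_bound {O : Set LV} (hf : O.Finite) {n : ℕ}
    (h : ∀ x, {v | v ∈ O ∧ cls v = x}.ncard ≤ n) : O.ncard ≤ (cls '' O).ncard * n := by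
  have := dc_le hf (hf.image cls) (fun v x => cls v = x) (m := 1) (n := n) ?_ (fun x _ => h x)
  · simpa using this
  · intro v hv
    rw [show {y | y ∈ cls '' O ∧ cls v = y} = {cls v} from by
      ext y; simp only [Set.mem_setOf_eq, Set.mem_singleton_iff]
      exact ⟨fun h => h.2.symm, fun h => ⟨⟨v, hv, h.symm⟩, h.symm⟩⟩]
    simp

lemma img_disj (hB : IsLeech B) {O O' : Set LV} {k l : ℤ} (hO : O ⊆ Lam B k) (hO' : O' ⊆ Lam B l)
    (hk : k ≤ 4) (hl : l ≤ 4) (hkl : k ≠ l) : Disjoint (cls '' O) (cls '' O') := by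
  rw [Set.disjoint_left]
  rintro x ⟨u, hu, rfl⟩ ⟨v, hv, hvu⟩
  have h1 : ty B u = k := hO hu
  have h2 : ty B v = l := hO' hv
  rcases short_cg hB (cls_eq.mp hvu) (by omega) (by omega) with h | h | h
  · rw [h] at h2; omega
  · rw [h, ty_neg] at h2; omega
  · omega

lemma good_of (hB : IsLeech B) {O2 O3 O4 : Set LV} (h2 : Orb B O2 2 (3 * 65520))
    (h3 : Orb B O3 3 (256 * 65520)) (h4 : Orb B O4 4 (6075 * 65520)) :
    Good B ∧ Lam B 2 = O2 ∧ Lam B 3 = O3 ∧ Lam B 4 = O4 := by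
  classical
  have f2 := h2.fin (by norm_num)
  have f3 := h3.fin (by norm_num)
  have f4 := h4.fin (by norm_num)
  have b2 := img_bound f2 (fib_le2 hB h2.sub (by norm_num))
  have b3 := img_bound f3 (fib_le2 hB h3.sub (by norm_num))
  have b4 := img_bound f4 (fib_le48 hB h4.sub f4)
  rw [h2.card] at b2
  rw [h3.card] at b3
  rw [h4.card] at b4
  have h0 : ({0} : Set LV) ⊆ Lam B 0 := by
    intro v hv; rw [Set.mem_singleton_iff] at hv; rw [hv]; exact ty_zero
  set U : Set (Fin 24 → ZMod 2) := cls '' {0} ∪ (cls '' O2 ∪ (cls '' O3 ∪ cls '' O4)) with hU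
  have c3 : (cls '' O3 ∪ cls '' O4).ncard = (cls '' O3).ncard + (cls '' O4).ncard :=
    Set.ncard_union_eq (img_disj hB h3.sub h4.sub (by norm_num) (by norm_num) (by norm_num))
      (Set.toFinite _) (Set.toFinite _)
  have c2 : (cls '' O2 ∪ (cls '' O3 ∪ cls '' O4)).ncard =
      (cls '' O2).ncard + (cls '' O3 ∪ cls '' O4).ncard :=
    Set.ncard_union_eq (Set.disjoint_union_right.mpr
      ⟨img_disj hB h2.sub h3.sub (by norm_num) (by norm_num) (by norm_num),
       img_disj hB h2.sub h4.sub (by norm_num) (by norm_num) (by norm_num)⟩)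
      (Set.toFinite _) (Set.toFinite _)
  have c0 : U.ncard = (cls '' {0}).ncard + (cls '' O2 ∪ (cls '' O3 ∪ cls '' O4)).ncard :=
    Set.ncard_union_eq (Set.disjoint_union_right.mpr
      ⟨img_disj hB h0 h2.sub (by norm_num) (by norm_num) (by norm_num),
       Set.disjoint_union_right.mpr
      ⟨img_disj hB h0 h3.sub (by norm_num) (by norm_num) (by norm_num),
       img_disj hB h0 h4.sub (by norm_num) (by norm_num) (by norm_num)⟩⟩)
      (Set.toFinite _) (Set.toFinite _)
  have cc : (cls '' {(0 : LV)}).ncard = 1 := by simp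
  have hle : U.ncard ≤ 16777216 := by
    rw [← cls_card, ← Set.ncard_univ]
    exact Set.ncard_le_ncard (Set.subset_univ _) (Set.toFinite _)
  have hUu : U = Set.univ := by
    apply Set.eq_of_subset_of_ncard_le (Set.subset_univ _) _ (Set.toFinite _)
    rw [Set.ncard_univ, cls_card]
    omega
  have cA4 : (cls '' O4).ncard * 48 = 6075 * 65520 := by omega
  have hcl : ∀ v : LV, ∃ s, cg s v ∧ (s = 0 ∨ s ∈ O2 ∨ s ∈ O3 ∨ s ∈ O4) := by
    intro v
    have : cls v ∈ U := by rw [hUu]; trivial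
    rcases this with ⟨s, hs, e⟩ | ⟨s, hs, e⟩ | ⟨s, hs, e⟩ | ⟨s, hs, e⟩
    · exact ⟨s, cls_eq.mp e, Or.inl hs⟩
    · exact ⟨s, cls_eq.mp e, Or.inr (Or.inl hs)⟩
    · exact ⟨s, cls_eq.mp e, Or.inr (Or.inr (Or.inl hs))⟩
    · exact ⟨s, cls_eq.mp e, Or.inr (Or.inr (Or.inr hs))⟩
  have t0 : ∀ {s : LV}, s = 0 → ty B s = 0 := fun h => by rw [h]; exact ty_zero
  have hty2 : ∀ {s : LV}, s ∈ O2 → ty B s = 2 := fun h => h2.sub h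
  have hty3 : ∀ {s : LV}, s ∈ O3 → ty B s = 3 := fun h => h3.sub h
  have hty4 : ∀ {s : LV}, s ∈ O4 → ty B s = 4 := fun h => h4.sub h
  have e2 : Lam B 2 = O2 := by
    apply Set.Subset.antisymm _ h2.sub
    intro v hv
    have hv' : ty B v = 2 := hv
    obtain ⟨s, hs, hs'⟩ := hcl v
    have hsl : ty B s ≤ 4 := by
      rcases hs' with h | h | h | h
      · rw [t0 h]; norm_num
      · rw [hty2 h]; norm_num
      · rw [hty3 h]; norm_num
      · rw [hty4 h]
    have hsv : v = s ∨ v = -s := by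
      rcases short_cg hB (cg_symm hs) (by omega) hsl with h | h | h
      · exact Or.inl h
      · exact Or.inr h
      · omega
    have hst : ty B s = 2 := by
      rcases hsv with h | h
      · rw [← h, hv']
      · rw [← hv', h, ty_neg]
    have : s ∈ O2 := by
      rcases hs' with h | h | h | h
      · rw [t0 h] at hst; norm_num at hst
      · exact h
      · rw [hty3 h] at hst; norm_num at hst
      · rw [hty4 h] at hst; norm_num at hst
    rcases hsv with h | h
    · rw [h]; exact this
    · rw [h]; exact h2.neg s this
  have e3 : Lam B 3 = O3 := by
    apply Set.Subset.antisymm _ h3.sub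
    intro v hv
    have hv' : ty B v = 3 := hv
    obtain ⟨s, hs, hs'⟩ := hcl v
    have hsl : ty B s ≤ 4 := by
      rcases hs' with h | h | h | h
      · rw [t0 h]; norm_num
      · rw [hty2 h]; norm_num
      · rw [hty3 h]; norm_num
      · rw [hty4 h]
    have hsv : v = s ∨ v = -s := by
      rcases short_cg hB (cg_symm hs) (by omega) hsl with h | h | h
      · exact Or.inl h
      · exact Or.inr h
      · omega
    have hst : ty B s = 3 := by
      rcases hsv with h | h
      · rw [← h, hv']
      · rw [← hv', h, ty_neg]
    have : s ∈ O3 := by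
      rcases hs' with h | h | h | h
      · rw [t0 h] at hst; norm_num at hst
      · rw [hty2 h] at hst; norm_num at hst
      · exact h
      · rw [hty4 h] at hst; norm_num at hst
    rcases hsv with h | h
    · rw [h]; exact this
    · rw [h]; exact h3.neg s this
  have h48 : ∀ f ∈ O4, {v | v ∈ O4 ∧ cls v = cls f}.ncard = 48 := by
    intro f hf
    have l1 := fib_le48 hB h4.sub f4 (cls f)
    by_contra hne
    have fS : {v | v ∈ O4 ∧ cls v = cls f}.Finite := f4.subset (fun v hv => hv.1)
    set S := {v | v ∈ O4 ∧ cls v = cls f} with hS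
    have d1 : (O4 \ S).ncard + S.ncard = 6075 * 65520 := by
      rw [Set.ncard_sdiff_add_ncard_of_subset (fun v hv => hv.1) f4, h4.card]
    have fD : (O4 \ S).Finite := f4.subset Set.diff_subset
    have d2 := img_bound fD (fib_le48 hB (Set.diff_subset.trans h4.sub) fD)
    have d3 : (cls '' (O4 \ S)).ncard + 1 ≤ (cls '' O4).ncard := by
      apply Set.ncard_lt_ncard _ (f4.image _)
      refine ⟨Set.image_mono Set.diff_subset, fun h => ?_⟩
      obtain ⟨g, hg, hgf⟩ := h ⟨f, hf, rfl⟩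
      exact hg.2 ⟨hg.1, hgf⟩
    omega
  have e4 : Lam B 4 = O4 := by
    apply Set.Subset.antisymm _ h4.sub
    intro v hv
    have hv' : ty B v = 4 := hv
    obtain ⟨s, hs, hs'⟩ := hcl v
    have hsl : ty B s = 4 := by
      have hsl : ty B s ≤ 4 := by
        rcases hs' with h | h | h | h
        · rw [t0 h]; norm_num
        · rw [hty2 h]; norm_num
        · rw [hty3 h]; norm_num
        · rw [hty4 h]
      rcases short_cg hB (cg_symm hs) (by omega) hsl with h | h | h
      · rw [← h, hv']
      · rw [← hv', h, ty_neg]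
      · exact h.2.1
    have hsO : s ∈ O4 := by
      rcases hs' with h | h | h | h
      · rw [t0 h] at hsl; norm_num at hsl
      · rw [hty2 h] at hsl; norm_num at hsl
      · rw [hty3 h] at hsl; norm_num at hsl
      · exact h
    by_contra hvO
    have fS : {v | v ∈ O4 ∧ cls v = cls s}.Finite := f4.subset (fun v hv => hv.1)
    have hk := h48 s hsO
    rw [Set.ncard_eq_toFinset_card _ fS] at hk
    have := fr_le hB (insert v fS.toFinset) ?_ ?_
    · rw [Finset.card_insert_of_notMem (by simp [hvO]), hk] at this
      norm_num at this
    · intro f hf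
      rw [Finset.mem_insert] at hf
      rcases hf with rfl | hf
      · exact hv'
      · simp at hf; exact hty4 hf.1
    · have : ∀ f ∈ insert v fS.toFinset, cls f = cls s := by
        intro f hf
        rw [Finset.mem_insert] at hf
        rcases hf with rfl | hf
        · exact (cls_eq.mpr hs).symm
        · simp at hf; exact hf.2
      intro f hf g hg
      exact cls_eq.mp ((this f hf).trans (this g hg).symm)
  have hfr : ∀ f, ty B f = 4 → {g | ty B g = 4 ∧ cg g f}.ncard = 48 := by
    intro f hf
    have : f ∈ O4 := by rw [← e4]; exact hf
    rw [← h48 f this]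
    congr 1; ext g
    simp only [Set.mem_setOf_eq, cls_eq, ← e4]; rfl
  refine ⟨⟨hB, ?_, ?_, ?_, ?_, ?_, ?_, ?_, ?_, hfr⟩, e2, e3, e4⟩
  · intro k
    obtain ⟨f, hf⟩ := h4.ne
    have hk := hfr f (hty4 hf)
    have fS : {g | ty B g = 4 ∧ cg g f}.Finite := Set.finite_of_ncard_ne_zero (by omega)
    rw [Set.ncard_eq_toFinset_card _ fS] at hk
    have pv := fr_parseval hB fS.toFinset (by intro g hg; simp at hg; exact hg.1)
      (by intro g hg g' hg'; simp at hg hg'; exact cg_trans hg.2 (cg_symm hg'.2)) hk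
    apply Set.Finite.of_injOn (f := fun v => fun g : fS.toFinset => pairZ B g v)
      (t := Set.Icc (fun _ => -(32 * k)) (fun _ => 32 * k)) _ _ (Set.finite_Icc _ _)
    · intro v hv
      have hv' : ty B v = k := hv
      have hb : ∀ g : fS.toFinset, pairZ B g v ^ 2 ≤ 32 * k := by
        intro g
        have := Finset.single_le_sum (f := fun g => pairZ B g v * pairZ B g v)
          (fun g _ => mul_self_nonneg _) g.2
        rw [pv v v, two_ty hB, hv'] at this
        nlinarith
      constructor
      · intro g
        have := hb g
        show -(32 * k) ≤ pairZ B g v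
        nlinarith [Int.le_self_sq (-pairZ B g v)]
      · intro g
        have := hb g
        show pairZ B g v ≤ 32 * k
        nlinarith [Int.le_self_sq (pairZ B g v)]
    · intro u _ v _ huv
      have h1 := pv (u - v) (u - v)
      rw [Finset.sum_eq_zero, two_ty hB] at h1
      · exact sub_eq_zero.mp (ty_eq_zero hB (by omega))
      · intro g hg
        have := congrFun huv ⟨g, hg⟩
        simp only at this
        rw [ip_sub_right, this]; simp
  · rw [e2, h2.card]
  · rw [e3, h3.card]
  · rw [e4, h4.card]
  · rw [e2]; exact h2.tr
  · rw [e3]; exact h3.tr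
  · rw [e4]; exact h4.tr
  · intro v
    obtain ⟨s, hs, h⟩ := hcl v
    refine ⟨s, hs, ?_⟩
    rcases h with h | h | h | h
    · exact Or.inl h
    · exact Or.inr (Or.inl (hty2 h))
    · exact Or.inr (Or.inr (Or.inl (hty3 h)))
    · exact Or.inr (Or.inr (Or.inr (hty4 h)))

end structure_facts


section counting
variable {B : Matrix (Fin 24) (Fin 24) ℤ}

/-- number of vectors of type `k` having inner product `j` with `w` -/
def cn (B : Matrix (Fin 24) (Fin 24) ℤ) (k j : ℤ) (w : LV) : ℕ :=
  {a | ty B a = k ∧ pairZ B a w = j}.ncard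

lemma Good.fn (G : Good B) (k : ℤ) (P : LV → Prop) : {a | ty B a = k ∧ P a}.Finite :=
  (G.fin k).subset (fun _ h => h.1)

lemma ncard_bij {α β : Type*} {s : Set α} {t : Set β} (f : α → β) (g : β → α)
    (h1 : ∀ a ∈ s, f a ∈ t) (h2 : ∀ b ∈ t, g b ∈ s) (h3 : ∀ a ∈ s, g (f a) = a)
    (h4 : ∀ b ∈ t, f (g b) = b) : s.ncard = t.ncard := by
  refine Set.ncard_congr (fun a _ => f a) h1 ?_ ?_
  · intro a b ha hb h; rw [← h3 a ha, ← h3 b hb]; exact congrArg g h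
  · intro b hb; exact ⟨g b, h2 b hb, h4 b hb⟩

lemma cn_neg (k j : ℤ) (w : LV) : cn B k (-j) w = cn B k j w := by
  refine ncard_bij (fun a => -a) (fun a => -a) ?_ ?_ (by simp) (by simp)
  · rintro a ⟨h1, h2⟩; exact ⟨by rw [ty_neg, h1], by rw [ip_neg_left, h2]; simp⟩
  · rintro a ⟨h1, h2⟩; exact ⟨by rw [ty_neg, h1], by rw [ip_neg_left, h2]⟩

lemma cn_iso {e : LV ≃+ LV} (he : IsIso B e) (k j : ℤ) (w : LV) : cn B k j (e w) = cn B k j w := by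
  symm
  refine ncard_bij (fun a => e a) (fun a => e.symm a) ?_ ?_ (by simp) (by simp)
  · rintro a ⟨h1, h2⟩; exact ⟨by rw [iso_ty he, h1], by rw [he, h2]⟩
  · rintro a ⟨h1, h2⟩
    refine ⟨by rw [← iso_ty he]; simp [h1], by rw [← he]; simp [h2]⟩

lemma cn_c2 (G : Good B) (k j : ℤ) {u v : LV} (hu : ty B u = 2) (hv : ty B v = 2) :
    cn B k j u = cn B k j v := by
  obtain ⟨e, he, h⟩ := G.t2 u hu v hv
  rw [← h, cn_iso he]
lemma cn_c3 (G : Good B) (k j : ℤ) {u v : LV} (hu : ty B u = 3) (hv : ty B v = 3) :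
    cn B k j u = cn B k j v := by
  obtain ⟨e, he, h⟩ := G.t3 u hu v hv
  rw [← h, cn_iso he]
lemma cn_c4 (G : Good B) (k j : ℤ) {u v : LV} (hu : ty B u = 4) (hv : ty B v = 4) :
    cn B k j u = cn B k j v := by
  obtain ⟨e, he, h⟩ := G.t4 u hu v hv
  rw [← h, cn_iso he]

lemma cn_refl (hB : IsLeech B) {w : LV} {l : ℤ} (hw : ty B w = l) (k j k' j' : ℤ)
    (hk : k' = k + l - j) (hj : j' = 2 * l - j) : cn B k j w = cn B k' j' w := by
  have h2 := two_ty hB w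
  refine ncard_bij (fun a => w - a) (fun a => w - a) ?_ ?_ (by simp) (by simp)
  · rintro a ⟨h1, h3⟩
    exact ⟨by rw [ty_sub hB, ip_comm hB]; omega, by rw [ip_sub_left]; omega⟩
  · rintro a ⟨h1, h3⟩
    exact ⟨by rw [ty_sub hB, ip_comm hB]; omega, by rw [ip_sub_left]; omega⟩

lemma cn_cls (hB : IsLeech B) {w : LV} {x : ℤ} (hw : ty B w = x) (k j k' j' : ℤ)
    (hk : k' = 4 * k + x - 2 * j) (hj : j' = 2 * j - 2 * x) :
    cn B k j w = {s | ty B s = k' ∧ cg s w ∧ pairZ B s w = j'}.ncard := by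
  have h2 := two_ty hB w
  refine Set.ncard_congr (fun a _ => (2 : ℤ) • a - w) ?_ ?_ ?_
  · rintro a ⟨h1, h3⟩
    refine ⟨by rw [ty_sub hB, ty_two hB, ip_smul_left]; omega,
      ⟨a - w, by ext i; simp; ring⟩, by rw [ip_sub_left, ip_smul_left]; omega⟩
  · intro a b _ _ h
    have : (2 : ℤ) • a = (2 : ℤ) • b := by simpa using h
    exact smul_right_injective _ (by norm_num) this
  · rintro s ⟨h1, ⟨y, rfl⟩, h3⟩
    rw [ip_add_left, ip_smul_left] at h3
    rw [ty_add hB, ip_smul_right, ty_two hB, ip_comm hB] at h1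
    refine ⟨w + y, ⟨by rw [ty_add hB, ip_comm hB]; omega, by rw [ip_add_left]; omega⟩,
      by ext i; simp; ring⟩

lemma ip_le (hB : IsLeech B) {a w : LV} {k l : ℤ} (ha : ty B a = k) (hw : ty B w = l)
    (h : a ≠ w) : pairZ B a w ≤ k + l - 2 := by
  have h1 := ty_sub hB a w
  rcases ty_min hB (a - w) with h2 | h2
  · exact absurd (sub_eq_zero.mp h2) h
  · omega

lemma ip_ge (hB : IsLeech B) {a w : LV} {k l : ℤ} (ha : ty B a = k) (hw : ty B w = l)
    (h : a ≠ -w) : -(k + l - 2) ≤ pairZ B a w := by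
  have := ip_le hB ha (by rw [ty_neg]; exact hw : ty B (-w) = l) h
  rw [ip_neg_right] at this; omega

lemma ne_of_ty {a w : LV} {k l : ℤ} (ha : ty B a = k) (hw : ty B w = l) (h : k ≠ l) :
    a ≠ w ∧ a ≠ -w :=
  ⟨by rintro rfl; omega, by rintro rfl; rw [ty_neg] at ha; omega⟩

lemma dcX (G : Good B) {X : Set LV} {x k : ℤ} (j : ℤ) {m n : ℕ} (hX : X ⊆ Lam B x)
    (h1 : ∀ w ∈ X, cn B k j w = m) (h0 : ∀ w, ty B w = x → w ∉ X → cn B k j w = 0)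
    (h2 : ∀ a, ty B a = k → cn B x j a = n) : X.ncard * m = (Lam B k).ncard * n := by
  refine dc ((G.fin x).subset hX) (G.fin k) (fun w a => pairZ B a w = j) ?_ ?_
  · intro w hw; exact h1 w hw
  · intro a ha
    rw [← h2 a ha]
    unfold cn
    congr 1
    ext w
    constructor
    · rintro ⟨h3, h4⟩; exact ⟨hX h3, by rw [ip_comm G.L]; exact h4⟩
    · rintro ⟨h3, h4⟩
      rw [ip_comm G.L] at h4
      refine ⟨?_, h4⟩
      by_contra h5
      have := h0 w h3 h5
      rw [cn, Set.ncard_eq_zero (G.fn k _)] at this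
      exact (this ▸ (⟨ha, h4⟩ : a ∈ {a | ty B a = k ∧ pairZ B a w = j}) : a ∈ (∅ : Set LV))

lemma dcL (G : Good B) {x k : ℤ} (j : ℤ) {m n : ℕ} 
    (h1 : ∀ w, ty B w = x → cn B k j w = m) 
    (h2 : ∀ a, ty B a = k → cn B x j a = n) : (Lam B x).ncard * m = (Lam B k).ncard * n :=
  dcX G j (le_refl _) h1 (fun _ h h1 => absurd h h1) h2

lemma dcX_le (G : Good B) {X : Set LV} {x k : ℤ} (j : ℤ) {m n : ℕ} (hX : X ⊆ Lam B x)
    (h1 : ∀ w ∈ X, m ≤ cn B k j w)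
    (h2 : ∀ a, ty B a = k → cn B x j a ≤ n) : X.ncard * m ≤ (Lam B k).ncard * n := by
  refine dc_le ((G.fin x).subset hX) (G.fin k) (fun w a => pairZ B a w = j) ?_ ?_
  · intro w hw; exact h1 w hw
  · intro a ha
    refine le_trans ?_ (h2 a ha)
    refine Set.ncard_le_ncard ?_ (G.fn x _)
    rintro w ⟨h3, h4⟩; exact ⟨hX h3, by rw [ip_comm G.L]; exact h4⟩

/-- expansion by inner products -/
lemma sum_cn (G : Good B) (k : ℤ) (w : LV) (N : ℤ) (g : ℤ → ℤ)
    (hN : ∀ a, ty B a = k → -N ≤ pairZ B a w ∧ pairZ B a w ≤ N) :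
    ∑ a ∈ (G.fin k).toFinset, g (pairZ B a w) = ∑ j ∈ Finset.Icc (-N) N, g j * cn B k j w := by
  classical
  rw [← Finset.sum_fiberwise_of_maps_to (t := Finset.Icc (-N) N) (g := fun a => pairZ B a w)]
  · refine Finset.sum_congr rfl fun j _ => ?_
    rw [Finset.sum_congr rfl (g := fun _ => g j), Finset.sum_const, nsmul_eq_mul, mul_comm]
    · congr 2
      rw [cn, ← Set.ncard_coe_finset]
      congr 1; ext a; simp [Lam]
    · intro a ha; rw [(Finset.mem_filter.mp ha).2]
  · intro a ha
    have : ty B a = k := by simpa [Lam] using ha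
    simpa using hN a this

lemma card_fin (G : Good B) (k : ℤ) : (G.fin k).toFinset.card = (Lam B k).ncard :=
  (Set.ncard_eq_toFinset_card _ _).symm

/-- a full frame as a finset -/
lemma half_frame (G : Good B) {f : LV} (hf : ty B f = 4) : ∃ S : Finset LV, S.card = 24 ∧
    (∀ g ∈ S, ty B g = 4 ∧ cg g f) ∧ (∀ g ∈ S, ∀ h ∈ S, g ≠ h → pairZ B g h = 0) := by
  classical
  have hfin := G.fn 4 (fun g => cg g f)
  have hc := G.fr f hf
  rw [Set.ncard_eq_toFinset_card _ hfin] at hc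
  have m : ∀ g ∈ hfin.toFinset, ty B g = 4 ∧ cg g f := fun g hg => by simpa using hg
  have hS : ∀ g ∈ hfin.toFinset, ty B g = 4 := fun g hg => (m g hg).1
  have hcg : ∀ g ∈ hfin.toFinset, ∀ h ∈ hfin.toFinset, cg g h := fun g hg h hh =>
    cg_trans (m g hg).2 (cg_symm (m h hh).2)
  obtain ⟨a1, a2⟩ := fr_split G.L _ hS hcg pos (fun f _ h => not_pos_both h)
  obtain ⟨b1, b2⟩ := fr_split G.L _ hS hcg (fun f => ¬ pos f)
    (fun f hf h => by simpa using (pos_or (ty4_ne (hS f hf))).resolve_left h)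
  have h1 := frame_le G.L _ a1 a2
  have h2 := frame_le G.L _ b1 b2
  have := Finset.card_filter_add_card_filter_not (s := hfin.toFinset) pos
  exact ⟨hfin.toFinset.filter pos, by omega, fun g hg => m g (Finset.mem_filter.mp hg).1, a2⟩

lemma sum_iso (G : Good B) (k : ℤ) {e : LV ≃+ LV} (he : IsIso B e) (g : LV → ℤ) :
    ∑ a ∈ (G.fin k).toFinset, g (e a) = ∑ a ∈ (G.fin k).toFinset, g a := by
  refine Finset.sum_bij (fun a _ => e a) ?_ ?_ ?_ (fun _ _ => rfl)
  · intro a ha; simp [Lam] at ha ⊢; rw [iso_ty he, ha]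
  · intro a _ b _ h; exact e.injective h
  · intro b hb; exact ⟨e.symm b, by simp [Lam] at hb ⊢; rw [← iso_ty he]; simp [hb], by simp⟩

lemma second_moment (G : Good B) (k : ℤ) (v : LV) :
    6 * ∑ a ∈ (G.fin k).toFinset, pairZ B a v ^ 2 = k * (Lam B k).ncard * ty B v := by
  classical
  set A := (G.fin k).toFinset with hA
  have hne : (Lam B 4).Nonempty := by
    rw [← Set.ncard_pos (G.fin 4), G.n4]; norm_num
  obtain ⟨f, hf⟩ := hne
  obtain ⟨S, hS, hm, ho⟩ := half_frame G (f := f) hf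
  have hm1 : ∀ g ∈ S, ty B g = 4 := fun g hg => (hm g hg).1
  set Q : LV → LV → ℤ := fun g h => ∑ a ∈ A, pairZ B g a * pairZ B h a with hQ
  have hQi : ∀ (e : LV ≃+ LV), IsIso B e → ∀ g h, Q (e g) (e h) = Q g h := by
    intro e he g h
    rw [hQ]; dsimp only
    rw [hA, ← sum_iso G k he]
    exact Finset.sum_congr rfl fun a _ => by rw [he, he]
  have hdiag : ∀ g ∈ S, Q g g = Q f f := by
    intro g hg
    obtain ⟨e, he, h⟩ := G.t4 f hf g (hm1 g hg)
    rw [← h, hQi e he]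
  have hoff : ∀ g ∈ S, ∀ h ∈ S, g ≠ h → Q g h = 0 := by
    intro g hg h hh hne
    obtain ⟨a, b, e1, e2, e3, e4, e5⟩ := cg_half G.L (cg_trans (hm g hg).2 (cg_symm (hm h hh).2))
    rw [hm1 g hg, hm1 h hh, ho g hg h hh hne] at e4 e5
    obtain ⟨e, he, hab⟩ := G.t2 a (show ty B a = 2 by omega) b (show ty B b = 2 by omega)
    have h1 : Q b b = Q a a := by rw [← hab, hQi e he]
    have h2 : Q g h = Q a a - Q b b := by
      rw [hQ]; dsimp only
      rw [← Finset.sum_sub_distrib]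
      refine Finset.sum_congr rfl fun x _ => ?_
      rw [e2, e3, ip_sub_left, ip_add_left]; ring
    rw [h2, h1, sub_self]
  have hC : 24 * Q f f = 16 * (k * (Lam B k).ncard) := by
    have : ∑ g ∈ S, Q g g = 24 * Q f f := by
      rw [Finset.sum_congr rfl hdiag, Finset.sum_const, hS]; simp
    rw [← this, hQ]; dsimp only
    rw [Finset.sum_comm, Finset.sum_congr rfl (g := fun _ => 16 * k)]
    · rw [Finset.sum_const, card_fin G]; simp; ring
    · intro a ha
      have hk : ty B a = k := by simpa [hA, Lam] using ha
      rw [parseval G.L S hS hm1 ho, two_ty G.L, hk]; ring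
  have key : 64 * ∑ a ∈ A, pairZ B a v ^ 2 = Q f f * (8 * (2 * ty B v)) := by
    rw [← two_ty G.L, ← parseval G.L S hS hm1 ho v v, Finset.mul_sum]
    have h1 : ∀ a ∈ A, 64 * pairZ B a v ^ 2 =
        ∑ g ∈ S, ∑ h ∈ S, (pairZ B g v * pairZ B h v) * (pairZ B g a * pairZ B h a) := by
      intro a _
      have h2 := parseval G.L S hS hm1 ho a v
      have : 64 * pairZ B a v ^ 2 = (8 * pairZ B a v) * (8 * pairZ B a v) := by ring
      rw [this, ← h2, Finset.sum_mul_sum]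
      exact Finset.sum_congr rfl fun g _ => Finset.sum_congr rfl fun h _ => by ring
    rw [Finset.sum_congr rfl h1, Finset.sum_comm, Finset.mul_sum]
    refine Finset.sum_congr rfl fun g hg => ?_
    rw [Finset.sum_comm]
    have h3 : ∀ h ∈ S, ∑ a ∈ A, (pairZ B g v * pairZ B h v) * (pairZ B g a * pairZ B h a) =
        (pairZ B g v * pairZ B h v) * Q g h := fun h _ => by rw [hQ]; dsimp only; rw [Finset.mul_sum]
    rw [Finset.sum_congr rfl h3, Finset.sum_eq_single g]
    · rw [hdiag g hg]; ring
    · intro h hh hne; rw [hoff g hg h hh hne.symm]; ring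
    · intro h; exact absurd hg h
  have : 24 * (64 * ∑ a ∈ A, pairZ B a v ^ 2) = (24 * Q f f) * (8 * (2 * ty B v)) := by
    rw [key]; ring
  rw [hC] at this
  linarith

end counting

section classes
variable {B : Matrix (Fin 24) (Fin 24) ℤ}

/-- the class of `w` contains a vector of type `i` -/
def Kt (B : Matrix (Fin 24) (Fin 24) ℤ) (i : ℤ) (w : LV) : Prop := ∃ s, ty B s = i ∧ cg s w

lemma Kt_iso {e : LV ≃+ LV} (he : IsIso B e) {i : ℤ} {w : LV} (h : Kt B i w) : Kt B i (e w) := by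
  obtain ⟨s, h1, h2⟩ := h
  exact ⟨e s, by rw [iso_ty he, h1], iso_cg.mpr h2⟩

lemma Orb.kt {O : Set LV} {k : ℤ} {c : ℕ} (h : Orb B O k c) {i : ℤ} {u : LV} (hu : u ∈ O)
    (hk : Kt B i u) : ∀ w ∈ O, Kt B i w := by
  intro w hw
  obtain ⟨e, he, rfl⟩ := h.tr u hu w hw
  exact Kt_iso he hk

lemma Kt_excl (hB : IsLeech B) {i j : ℤ} {w : LV} (h1 : Kt B i w) (h2 : Kt B j w) (hi : i ≤ 4)
    (hj : j ≤ 4) : i = j := by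
  obtain ⟨s, a1, a2⟩ := h1
  obtain ⟨t, b1, b2⟩ := h2
  rcases short_cg hB (cg_trans a2 (cg_symm b2)) (by omega) (by omega) with h | h | h
  · rw [← a1, ← b1, h]
  · rw [← a1, ← b1, h, ty_neg]
  · omega

lemma kt_even (G : Good B) {w : LV} {x y : ℤ} (hw : ty B w = x) (hx : x = 2 * y) :
    Kt B 0 w ∨ Kt B 2 w ∨ Kt B 4 w := by
  obtain ⟨s, h1, h2⟩ := G.cl w
  obtain ⟨r, hr⟩ := cg_ty G.L h1
  rcases h2 with h | h | h | h
  · exact Or.inl ⟨s, by rw [h, ty_zero], h1⟩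
  · exact Or.inr (Or.inl ⟨s, h, h1⟩)
  · omega
  · exact Or.inr (Or.inr ⟨s, h, h1⟩)

lemma kt_odd (G : Good B) {w : LV} {x y : ℤ} (hw : ty B w = x) (hx : x = 2 * y + 1) :
    Kt B 3 w := by
  obtain ⟨s, h1, h2⟩ := G.cl w
  obtain ⟨r, hr⟩ := cg_ty G.L h1
  rcases h2 with h | h | h | h
  · rw [h, ty_zero] at hr; omega
  · omega
  · exact ⟨s, h, h1⟩
  · omega

lemma kt_zero (hB : IsLeech B) {w : LV} (h : Kt B 0 w) : ∃ u, w = (2 : ℤ) • u ∧ ty B w = 4 * ty B u := by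
  obtain ⟨s, h1, h2⟩ := h
  have hs : s = 0 := ty_eq_zero hB (by omega)
  obtain ⟨x, hx⟩ := cg_symm h2
  rw [hs, zero_add] at hx
  exact ⟨x, hx, by rw [hx, ty_two hB]⟩

/-- class counts -/
def fc (B : Matrix (Fin 24) (Fin 24) ℤ) (i : ℤ) (w a : LV) (j : ℤ) : ℕ :=
  {s | ty B s = i ∧ cg s w ∧ pairZ B s a = j}.ncard

lemma fc_neg (i : ℤ) (w a : LV) (j : ℤ) : fc B i w a (-j) = fc B i w a j := by
  refine ncard_bij (fun a => -a) (fun a => -a) ?_ ?_ (by simp) (by simp)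
  · rintro a ⟨h1, h2, h3⟩
    exact ⟨by rw [ty_neg, h1], cg_neg h2, by rw [ip_neg_left, h3]; simp⟩
  · rintro a ⟨h1, h2, h3⟩; exact ⟨by rw [ty_neg, h1], cg_neg h2, by rw [ip_neg_left, h3]⟩

lemma cn_fc (hB : IsLeech B) {w : LV} {x : ℤ} (hw : ty B w = x) (k j k' j' : ℤ)
    (hk : k' = 4 * k + x - 2 * j) (hj : j' = 2 * j - 2 * x) : cn B k j w = fc B k' w w j' :=
  cn_cls hB hw k j k' j' hk hj

lemma fc_empty (hB : IsLeech B) {i k' : ℤ} {w : LV} (h : Kt B i w) (hi : i ≤ 4) (hk : k' ≤ 4)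
    (hne : k' ≠ i) (a : LV) (j : ℤ) : fc B k' w a j = 0 := by
  rw [fc, show {s | ty B s = k' ∧ cg s w ∧ pairZ B s a = j} = ∅ from ?_, Set.ncard_empty]
  ext s
  simp only [Set.mem_ofPred_eq, Set.mem_empty_iff_false, iff_false]
  rintro ⟨h1, h2, _⟩
  exact hne (Kt_excl hB ⟨s, h1, h2⟩ h hk hi)

lemma fc_pm (hB : IsLeech B) {i : ℤ} {w s s' : LV} (hi : i < 4) (hs : ty B s = i) (h : cg s w)
    (hs' : ty B s' = i) (h' : cg s' w) : s' = s ∨ s' = -s := by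
  rcases short_cg hB (cg_trans h' (cg_symm h)) (by omega) (by omega) with h | h | h
  · exact Or.inl h
  · exact Or.inr h
  · omega

lemma fc_one (hB : IsLeech B) {i : ℤ} {w s a : LV} {j : ℤ} (hi : i < 4) (hs : ty B s = i)
    (h : cg s w) (hj : j ≠ 0) (h1 : pairZ B s a = j ∨ pairZ B s a = -j) : fc B i w a j = 1 := by
  rw [fc, Set.ncard_eq_one]
  rcases h1 with h1 | h1
  · refine ⟨s, ?_⟩
    ext s'
    simp only [Set.mem_ofPred_eq, Set.mem_singleton_iff]
    constructor
    · rintro ⟨a1, a2, a3⟩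
      rcases fc_pm hB hi hs h a1 a2 with h | h
      · exact h
      · rw [h, ip_neg_left] at a3; omega
    · rintro rfl; exact ⟨hs, h, h1⟩
  · refine ⟨-s, ?_⟩
    ext s'
    simp only [Set.mem_ofPred_eq, Set.mem_singleton_iff]
    constructor
    · rintro ⟨a1, a2, a3⟩
      rcases fc_pm hB hi hs h a1 a2 with h | h
      · rw [h] at a3; omega
      · exact h
    · rintro rfl; exact ⟨by rw [ty_neg, hs], cg_neg h, by rw [ip_neg_left, h1]; simp⟩

lemma fc_two (hB : IsLeech B) {i : ℤ} {w s a : LV} (hi : i < 4) (hs : ty B s = i)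
    (h : cg s w) (h0 : i ≠ 0) (h1 : pairZ B s a = 0) : fc B i w a 0 = 2 := by
  rw [fc, Set.ncard_eq_two]
  refine ⟨s, -s, ?_, ?_⟩
  · intro h2
    have : s = 0 := by
      ext i; have := congrFun h2 i; simp only [Pi.neg_apply, Pi.zero_apply] at this ⊢; omega
    rw [this, ty_zero] at hs; exact h0 hs.symm
  · ext s'
    simp only [Set.mem_ofPred_eq, Set.mem_insert_iff, Set.mem_singleton_iff]
    constructor
    · rintro ⟨a1, a2, a3⟩
      exact fc_pm hB hi hs h a1 a2
    · rintro (rfl | rfl)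
      · exact ⟨hs, h, h1⟩
      · exact ⟨by rw [ty_neg, hs], cg_neg h, by rw [ip_neg_left, h1]; simp⟩

lemma fc_zero (hB : IsLeech B) {i : ℤ} {w s a : LV} {j : ℤ} (hi : i < 4) (hs : ty B s = i)
    (h : cg s w) (h1 : pairZ B s a ≠ j) (h2 : pairZ B s a ≠ -j) : fc B i w a j = 0 := by
  rw [fc, show {s | ty B s = i ∧ cg s w ∧ pairZ B s a = j} = ∅ from ?_, Set.ncard_empty]
  ext s'
  simp only [Set.mem_ofPred_eq, Set.mem_empty_iff_false, iff_false]
  rintro ⟨a1, a2, a3⟩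
  rcases fc_pm hB hi hs h a1 a2 with h | h
  · rw [h] at a3; omega
  · rw [h, ip_neg_left] at a3; omega

lemma fc_none {i : ℤ} {w a : LV} {j : ℤ}
    (h : ∀ s, ty B s = i → cg s w → pairZ B s a ≠ j) : fc B i w a j = 0 := by
  rw [fc, show {s | ty B s = i ∧ cg s w ∧ pairZ B s a = j} = ∅ from ?_, Set.ncard_empty]
  ext s'
  simp only [Set.mem_ofPred_eq, Set.mem_empty_iff_false, iff_false]
  rintro ⟨a1, a2, a3⟩
  exact h s' a1 a2 a3

lemma fc_sum (G : Good B) {w : LV} (h : Kt B 4 w) (a : LV) (N : ℤ)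
    (hN : ∀ s, ty B s = 4 → cg s w → -N ≤ pairZ B s a ∧ pairZ B s a ≤ N) :
    ∑ j ∈ Finset.Icc (-N) N, (fc B 4 w a j : ℤ) = 48 ∧
    ∑ j ∈ Finset.Icc (-N) N, j ^ 2 * (fc B 4 w a j : ℤ) = 32 * ty B a := by
  classical
  obtain ⟨f, hf, hfw⟩ := h
  have hfin := G.fn 4 (fun s => cg s w)
  set S := hfin.toFinset with hS
  have m : ∀ g ∈ S, ty B g = 4 ∧ cg g w := fun g hg => by simpa [hS] using hg
  have hc : S.card = 48 := by
    rw [hS, ← Set.ncard_eq_toFinset_card _ hfin, ← G.fr f hf]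
    congr 1; ext s
    exact ⟨fun h => ⟨h.1, cg_trans h.2 (cg_symm hfw)⟩, fun h => ⟨h.1, cg_trans h.2 hfw⟩⟩
  have hp := fr_parseval G.L S (fun g hg => (m g hg).1)
    (fun g hg h hh => cg_trans (m g hg).2 (cg_symm (m h hh).2)) hc a a
  have key : ∀ g : ℤ → ℤ, ∑ s ∈ S, g (pairZ B s a) =
      ∑ j ∈ Finset.Icc (-N) N, g j * (fc B 4 w a j : ℤ) := by
    intro g
    rw [← Finset.sum_fiberwise_of_maps_to (t := Finset.Icc (-N) N) (g := fun s => pairZ B s a)]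
    · refine Finset.sum_congr rfl fun j _ => ?_
      rw [Finset.sum_congr rfl (g := fun _ => g j), Finset.sum_const, nsmul_eq_mul, mul_comm]
      · congr 2
        rw [fc, ← Set.ncard_coe_finset]
        congr 1; ext s; simp [hS, and_assoc]
      · intro a ha; rw [(Finset.mem_filter.mp ha).2]
    · intro s hs
      simpa using hN s (m s hs).1 (m s hs).2
  constructor
  · have := key (fun _ => 1)
    simp only [one_mul] at this
    rw [← this, Finset.sum_const, hc]; simp
  · have := key (fun j => j ^ 2)
    rw [← this]
    rw [two_ty G.L] at hp
    rw [Finset.sum_congr rfl (fun s _ => sq (pairZ B s a)), hp]; ring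

end classes

section numbers
variable {B : Matrix (Fin 24) (Fin 24) ℤ}

lemma se4 (F : ℤ → ℤ) (h : ∀ j, F (-j) = F j) :
    ∑ j ∈ Finset.Icc (-4 : ℤ) 4, F j = F 0 + 2 * (F 1 + F 2 + F 3 + F 4) := by
  rw [show Finset.Icc (-4 : ℤ) 4 = {-4, -3, -2, -1, 0, 1, 2, 3, 4} from by decide]
  simp [h]; ring

lemma se6 (F : ℤ → ℤ) (h : ∀ j, F (-j) = F j) :
    ∑ j ∈ Finset.Icc (-6 : ℤ) 6, F j = F 0 + 2 * (F 1 + F 2 + F 3 + F 4 + F 5 + F 6) := by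
  rw [show Finset.Icc (-6 : ℤ) 6 = {-6, -5, -4, -3, -2, -1, 0, 1, 2, 3, 4, 5, 6} from by decide]
  simp [h]; ring

lemma fc_sum6 (G : Good B) {w : LV} (h : Kt B 4 w) (a : LV)
    (hN : ∀ s, ty B s = 4 → cg s w → -6 ≤ pairZ B s a ∧ pairZ B s a ≤ 6) :
    (fc B 4 w a 0 : ℤ) + 2 * (fc B 4 w a 1 + fc B 4 w a 2 + fc B 4 w a 3 + fc B 4 w a 4 +
      fc B 4 w a 5 + fc B 4 w a 6) = 48 ∧
    2 * ((fc B 4 w a 1 : ℤ) + 4 * fc B 4 w a 2 + 9 * fc B 4 w a 3 + 16 * fc B 4 w a 4 +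
      25 * fc B 4 w a 5 + 36 * fc B 4 w a 6) = 32 * ty B a := by
  obtain ⟨h1, h2⟩ := fc_sum G h a 6 hN
  rw [se6 _ (fun j => by rw [fc_neg])] at h1
  rw [se6 _ (fun j => by rw [fc_neg, neg_sq])] at h2
  constructor
  · exact h1
  · rw [← h2]; ring

lemma cn_sum6 (G : Good B) (k : ℤ) (a : LV)
    (hN : ∀ s, ty B s = k → -6 ≤ pairZ B s a ∧ pairZ B s a ≤ 6) :
    (cn B k 0 a : ℤ) + 2 * (cn B k 1 a + cn B k 2 a + cn B k 3 a + cn B k 4 a +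
      cn B k 5 a + cn B k 6 a) = (Lam B k).ncard ∧
    12 * ((cn B k 1 a : ℤ) + 4 * cn B k 2 a + 9 * cn B k 3 a + 16 * cn B k 4 a +
      25 * cn B k 5 a + 36 * cn B k 6 a) = k * (Lam B k).ncard * ty B a := by
  have h1 := sum_cn G k a 6 (fun _ => 1) hN
  have h2 := sum_cn G k a 6 (fun j => j ^ 2) hN
  rw [se6 _ (fun j => by rw [cn_neg])] at h1
  rw [se6 _ (fun j => by rw [cn_neg, neg_sq])] at h2
  rw [Finset.sum_const, card_fin G] at h1
  have h3 := second_moment G k a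
  rw [h2] at h3
  constructor
  · simp at h1; linarith
  · rw [← h3]; ring

lemma cn_none {k j : ℤ} {w : LV} (h : ∀ a, ty B a = k → pairZ B a w ≠ j) : cn B k j w = 0 := by
  rw [cn, show {a | ty B a = k ∧ pairZ B a w = j} = ∅ from ?_, Set.ncard_empty]
  ext s'
  simp only [Set.mem_ofPred_eq, Set.mem_empty_iff_false, iff_false]
  rintro ⟨a1, a2⟩
  exact h s' a1 a2

lemma cn_le (G : Good B) (k j : ℤ) (w : LV) : cn B k j w ≤ (Lam B k).ncard :=
  Set.ncard_le_ncard (fun _ h => h.1) (G.fin k)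

lemma ex2 (G : Good B) : ∃ a, ty B a = 2 := by
  have : (Lam B 2).Nonempty := by rw [← Set.ncard_pos (G.fin 2), G.n2]; norm_num
  exact this
lemma ex3 (G : Good B) : ∃ a, ty B a = 3 := by
  have : (Lam B 3).Nonempty := by rw [← Set.ncard_pos (G.fin 3), G.n3]; norm_num
  exact this
lemma ex4 (G : Good B) : ∃ a, ty B a = 4 := by
  have : (Lam B 4).Nonempty := by rw [← Set.ncard_pos (G.fin 4), G.n4]; norm_num
  exact this

lemma M4 (G : Good B) {f : LV} (hf : ty B f = 4) : cn B 2 4 f = 46 := by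
  have hff := two_ty G.L f
  have hne : f ≠ -f := by
    intro h2
    have : f = 0 := by
      ext i; have := congrFun h2 i; simp only [Pi.neg_apply, Pi.zero_apply] at this ⊢; omega
    exact ty4_ne hf this
  rw [cn_fc G.L hf 2 4 4 0 (by norm_num) (by norm_num)]
  have h1 := G.fr f hf
  have h2 : {g | ty B g = 4 ∧ cg g f} =
      insert f (insert (-f) {s | ty B s = 4 ∧ cg s f ∧ pairZ B s f = 0}) := by
    ext s
    simp only [Set.mem_ofPred_eq, Set.mem_insert_iff]
    constructor
    · rintro ⟨a1, a2⟩
      by_cases e1 : s = f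
      · exact Or.inl e1
      by_cases e2 : s = -f
      · exact Or.inr (Or.inl e2)
      exact Or.inr (Or.inr ⟨a1, a2, fr_orth G.L a1 hf a2 e1 e2⟩)
    · rintro (rfl | rfl | h)
      · exact ⟨hf, cg_refl _⟩
      · exact ⟨by rw [ty_neg, hf], cg_neg (cg_refl _)⟩
      · exact ⟨h.1, h.2.1⟩
  have hfin := G.fn 4 (fun s => cg s f ∧ pairZ B s f = 0)
  rw [h2, Set.ncard_insert_of_notMem _ (hfin.insert _), Set.ncard_insert_of_notMem _ hfin] at h1
  · unfold fc; omega
  · rintro ⟨_, _, h⟩; rw [ip_neg_left] at h; omega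
  · rw [Set.mem_insert_iff]
    rintro (h | ⟨_, _, h⟩)
    · exact hne h
    · omega

lemma s6a (G : Good B) {w : LV} (hw : ty B w = 6) (hK : Kt B 4 w) :
    (∀ s, ty B s = 4 → cg s w → pairZ B s w = 2 ∨ pairZ B s w = -2) ∧ fc B 4 w w 2 = 24 := by
  have h : ∀ s, ty B s = 4 → cg s w → pairZ B s w = 2 ∨ pairZ B s w = -2 := by
    intro s hs hc
    obtain ⟨n1, n2⟩ := ne_of_ty hs hw (by norm_num)
    obtain ⟨α, β, h1, h2, h3, h4⟩ := half_cases G.L hc n1 n2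
    omega
  refine ⟨h, ?_⟩
  obtain ⟨h1, h2⟩ := fc_sum6 G hK w (fun s a b => by have := h s a b; omega)
  have z : ∀ j : ℤ, j ≠ 2 → j ≠ -2 → fc B 4 w w j = 0 := fun j h1 h2 =>
    fc_none fun s a b => by have := h s a b; omega
  rw [z 0 (by norm_num) (by norm_num), z 1 (by norm_num) (by norm_num), z 3 (by norm_num) (by norm_num),
    z 4 (by norm_num) (by norm_num), z 5 (by norm_num) (by norm_num), z 6 (by norm_num) (by norm_num)] at h1
  push_cast at h1
  omega

lemma s8b (G : Good B) {w : LV} (hw : ty B w = 8) (hK : Kt B 4 w) :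
    fc B 4 w w 4 = 8 ∧ fc B 4 w w 0 = 32 := by
  have h : ∀ s, ty B s = 4 → cg s w → pairZ B s w = 4 ∨ pairZ B s w = 0 ∨ pairZ B s w = -4 := by
    intro s hs hc
    obtain ⟨n1, n2⟩ := ne_of_ty hs hw (by norm_num)
    obtain ⟨α, β, h1, h2, h3, h4⟩ := half_cases G.L hc n1 n2
    omega
  obtain ⟨h1, h2⟩ := fc_sum6 G hK w (fun s a b => by have := h s a b; omega)
  have z : ∀ j : ℤ, j ≠ 4 → j ≠ 0 → j ≠ -4 → fc B 4 w w j = 0 := fun j h1 h2 h3 =>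
    fc_none fun s a b => by have := h s a b; omega
  rw [z 1 (by norm_num) (by norm_num) (by norm_num), z 2 (by norm_num) (by norm_num) (by norm_num),
    z 3 (by norm_num) (by norm_num) (by norm_num), 
    z 5 (by norm_num) (by norm_num) (by norm_num), z 6 (by norm_num) (by norm_num) (by norm_num)] at h1 h2
  rw [hw] at h2
  push_cast at h1 h2
  omega

lemma s10a (G : Good B) {w : LV} (hw : ty B w = 10) (hK : Kt B 4 w) :
    (∀ s, ty B s = 4 → cg s w → pairZ B s w = 2 ∨ pairZ B s w = -2 ∨ pairZ B s w = 6 ∨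
      pairZ B s w = -6) ∧ fc B 4 w w 6 = 2 := by
  have h : ∀ s, ty B s = 4 → cg s w → pairZ B s w = 2 ∨ pairZ B s w = -2 ∨ pairZ B s w = 6 ∨
      pairZ B s w = -6 := by
    intro s hs hc
    obtain ⟨n1, n2⟩ := ne_of_ty hs hw (by norm_num)
    obtain ⟨α, β, h1, h2, h3, h4⟩ := half_cases G.L hc n1 n2
    omega
  refine ⟨h, ?_⟩
  obtain ⟨h1, h2⟩ := fc_sum6 G hK w (fun s a b => by have := h s a b; omega)
  have z : ∀ j : ℤ, j ≠ 2 → j ≠ -2 → j ≠ 6 → j ≠ -6 → fc B 4 w w j = 0 := fun j _ _ _ _ =>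
    fc_none fun s a b => by have := h s a b; omega
  rw [z 0 (by norm_num) (by norm_num) (by norm_num) (by norm_num)] at h1
  rw [z 1 (by norm_num) (by norm_num) (by norm_num) (by norm_num),
    z 3 (by norm_num) (by norm_num) (by norm_num) (by norm_num), 
    z 4 (by norm_num) (by norm_num) (by norm_num) (by norm_num),
    z 5 (by norm_num) (by norm_num) (by norm_num) (by norm_num)] at h1 h2
  rw [hw] at h2
  push_cast at h1 h2
  omega

/-- bounds for type 2 against type 2,3,4 -/
lemma b2 (hB : IsLeech B) {a w : LV} {l : ℤ} (ha : ty B a = 2) (hw : ty B w = l) (hl : 2 < l) :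
    -l ≤ pairZ B a w ∧ pairZ B a w ≤ l := by
  obtain ⟨n1, n2⟩ := ne_of_ty ha hw (by omega)
  have := ip_le hB ha hw n1
  have := ip_ge hB ha hw n2
  omega

lemma m1m3 (G : Good B) {a : LV} (ha : ty B a = 2) : cn B 4 1 a = 23 * cn B 4 3 a := by
  have key : ∀ w, ty B w = 4 → (∃ r, pairZ B w a = 2 * r + 1) →
      fc B 4 w a 1 = 23 ∧ fc B 4 w a 3 = 1 := by
    rintro w hw ⟨r, hr⟩
    have h : ∀ s, ty B s = 4 → cg s w → pairZ B s a = 1 ∨ pairZ B s a = -1 ∨ pairZ B s a = 3 ∨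
        pairZ B s a = -3 := by
      intro s hs hc
      have := b2 G.L ha hs (by norm_num)
      obtain ⟨t, ht⟩ := cg_parity (B := B) hc a
      rw [ip_comm G.L a s, ip_comm G.L a w] at ht
      rw [ip_comm G.L] at this
      omega
    obtain ⟨h1, h2⟩ := fc_sum6 G ⟨w, hw, cg_refl w⟩ a (fun s a b => by have := h s a b; omega)
    have z : ∀ j : ℤ, j ≠ 1 → j ≠ -1 → j ≠ 3 → j ≠ -3 → fc B 4 w a j = 0 := fun j _ _ _ _ =>
      fc_none fun s a b => by have := h s a b; omega
    rw [z 0 (by norm_num) (by norm_num) (by norm_num) (by norm_num)] at h1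
    rw [z 2 (by norm_num) (by norm_num) (by norm_num) (by norm_num),
      z 6 (by norm_num) (by norm_num) (by norm_num) (by norm_num), 
      z 4 (by norm_num) (by norm_num) (by norm_num) (by norm_num),
      z 5 (by norm_num) (by norm_num) (by norm_num) (by norm_num)] at h1 h2
    rw [ha] at h2
    push_cast at h1 h2
    omega
  have := dc (G.fn 4 (fun g => pairZ B g a = 1)) (G.fn 4 (fun g => pairZ B g a = 3))
    (fun x y => cg x y) (m := 1) (n := 23) ?_ ?_
  · unfold cn; omega
  · rintro x ⟨h1, h2⟩
    rw [← (key x h1 ⟨0, by omega⟩).2, fc]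
    congr 1; ext y
    exact ⟨fun h => ⟨h.1.1, cg_symm h.2, h.1.2⟩, fun h => ⟨⟨h.1, h.2.2⟩, cg_symm h.2.1⟩⟩
  · rintro x ⟨h1, h2⟩
    rw [← (key x h1 ⟨1, by omega⟩).1, fc]
    congr 1; ext y
    exact ⟨fun h => ⟨h.1.1, h.2, h.1.2⟩, fun h => ⟨⟨h.1, h.2.2⟩, h.2.1⟩⟩

end numbers

section numbers2
variable {B : Matrix (Fin 24) (Fin 24) ℤ}

lemma k2_6 (G : Good B) {w : LV} (hw : ty B w = 6) (hK : Kt B 2 w) : cn B 2 6 w = 2 := by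
  rw [cn_fc G.L hw 2 6 2 0 (by norm_num) (by norm_num)]
  obtain ⟨s, h1, h2⟩ := hK
  refine fc_two G.L (by norm_num) h1 h2 (by norm_num) ?_
  obtain ⟨n1, n2⟩ := ne_of_ty h1 hw (by norm_num)
  obtain ⟨α, β, h1, h2, h3, h4⟩ := half_cases G.L h2 n1 n2
  omega

lemma k4_6 (G : Good B) {w : LV} (hw : ty B w = 6) (hK : Kt B 4 w) : cn B 2 5 w = 24 := by
  rw [cn_fc G.L hw 2 5 4 (-2) (by norm_num) (by norm_num), fc_neg]
  exact (s6a G hw hK).2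

lemma k_6 (G : Good B) {w : LV} (hw : ty B w = 6) : Kt B 2 w ∨ Kt B 4 w := by
  rcases kt_even G hw (y := 3) (by norm_num) with h | h
  · obtain ⟨u, _, hu⟩ := kt_zero G.L h; omega
  · exact h

lemma c65 (G : Good B) {a : LV} (ha : ty B a = 2) : cn B 6 5 a = cn B 4 3 a := by
  rw [cn_refl G.L ha 6 5 3 (-1) (by norm_num) (by norm_num), cn_neg,
    cn_refl G.L ha 3 1 4 3 (by norm_num) (by norm_num)]

lemma O6a_K (G : Good B) {O : Set LV} (h : Orb B O 6 (518400 * 65520)) : ∀ w ∈ O, Kt B 4 w := by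
  obtain ⟨u, hu⟩ := h.ne
  rcases k_6 G (h.sub hu) with hk | hk
  · exfalso
    have hall := h.kt hu hk
    have := dcX_le G (k := 2) 6 (m := 2) (n := 196560) h.sub
      (fun w hw => (k2_6 G (h.sub hw) (hall w hw)).ge) ?_
    · rw [h.card, G.n2] at this; norm_num at this
    · intro a ha
      rw [cn_refl G.L ha 6 6 2 (-2) (by norm_num) (by norm_num), ← G.n2]
      exact cn_le G _ _ _
  · exact h.kt hu hk

lemma k_8 (G : Good B) {w : LV} (hw : ty B w = 8) : cn B 2 8 w = 1 ∨ cn B 2 7 w = 1 ∨ Kt B 4 w := by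
  rcases kt_even G hw (y := 4) (by norm_num) with h | h | h
  · left
    obtain ⟨u, rfl, hu⟩ := kt_zero G.L h
    have h2 := two_ty G.L u
    rw [cn, Set.ncard_eq_one]
    refine ⟨u, ?_⟩
    ext a
    simp only [Set.mem_ofPred_eq, Set.mem_singleton_iff]
    constructor
    · rintro ⟨h1, h3⟩
      by_contra hne
      have := ip_le G.L h1 (show ty B u = 2 by omega) hne
      rw [ip_smul_right] at h3; omega
    · rintro rfl; exact ⟨by omega, by rw [ip_smul_right]; omega⟩
  · right; left
    rw [cn_fc G.L hw 2 7 2 (-2) (by norm_num) (by norm_num), fc_neg]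
    obtain ⟨s, h1, h2⟩ := h
    refine fc_one G.L (by norm_num) h1 h2 (by norm_num) ?_
    obtain ⟨n1, n2⟩ := ne_of_ty h1 hw (by norm_num)
    obtain ⟨α, β, h1, h2, h3, h4⟩ := half_cases G.L h2 n1 n2
    omega
  · exact Or.inr (Or.inr h)

lemma k4_8 (G : Good B) {w : LV} (hw : ty B w = 8) (hK : Kt B 4 w) :
    cn B 2 6 w = 8 ∧ cn B 3 8 w = 32 := by
  rw [cn_fc G.L hw 2 6 4 (-4) (by norm_num) (by norm_num), fc_neg,
    cn_fc G.L hw 3 8 4 0 (by norm_num) (by norm_num)]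
  exact s8b G hw hK

lemma Orb.cn {O : Set LV} {x : ℤ} {c : ℕ} (h : Orb B O x c) {k j : ℤ} {u : LV} (hu : u ∈ O)
    {m : ℕ} (hk : cn B k j u = m) : ∀ w ∈ O, cn B k j w = m := by
  intro w hw
  obtain ⟨e, he, rfl⟩ := h.tr u hu w hw
  rw [cn_iso he, hk]

lemma O8b_K (G : Good B) {O : Set LV} (h : Orb B O 8 (12295800 * 65520)) : ∀ w ∈ O, Kt B 4 w := by
  obtain ⟨u, hu⟩ := h.ne
  rcases k_8 G (h.sub hu) with hk | hk | hk
  · exfalso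
    have hall := h.cn hu hk
    have := dcX_le G (k := 2) 8 (m := 1) (n := 196560) h.sub (fun w hw => (hall w hw).ge) ?_
    · rw [h.card, G.n2] at this; norm_num at this
    · intro a ha
      rw [cn_refl G.L ha 8 8 2 (-4) (by norm_num) (by norm_num), ← G.n2]
      exact cn_le G _ _ _
  · exfalso
    have hall := h.cn hu hk
    have := dcX_le G (k := 2) 7 (m := 1) (n := 196560) h.sub (fun w hw => (hall w hw).ge) ?_
    · rw [h.card, G.n2] at this; norm_num at this
    · intro a ha
      rw [cn_refl G.L ha 8 7 3 (-3) (by norm_num) (by norm_num), cn_neg,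
        cn_refl G.L ha 3 3 2 1 (by norm_num) (by norm_num), ← G.n2]
      exact cn_le G _ _ _
  · exact h.kt hu hk

lemma e24 (G : Good B) (j : ℤ) {a f : LV} (ha : ty B a = 2) (hf : ty B f = 4) :
    398034000 * cn B 2 j f = 196560 * cn B 4 j a := by
  rw [← G.n4, ← G.n2]
  exact dcL G j (fun w hw => cn_c4 G 2 j hw hf) (fun w hw => cn_c2 G 4 j hw ha)

lemma e23 (G : Good B) (j : ℤ) {a f : LV} (ha : ty B a = 2) (hf : ty B f = 3) :
    16773120 * cn B 2 j f = 196560 * cn B 3 j a := by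
  rw [← G.n3, ← G.n2]
  exact dcL G j (fun w hw => cn_c3 G 2 j hw hf) (fun w hw => cn_c2 G 3 j hw ha)

lemma e34 (G : Good B) (j : ℤ) {a f : LV} (ha : ty B a = 3) (hf : ty B f = 4) :
    398034000 * cn B 3 j f = 16773120 * cn B 4 j a := by
  rw [← G.n4, ← G.n3]
  exact dcL G j (fun w hw => cn_c4 G 3 j hw hf) (fun w hw => cn_c3 G 4 j hw ha)

lemma Mvals (G : Good B) {O O' : Set LV} (h6 : Orb B O 6 (518400 * 65520))
    (h8 : Orb B O' 8 (12295800 * 65520)) {f : LV} (hf : ty B f = 4) :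
    cn B 2 0 f = 65780 ∧ cn B 2 1 f = 47104 ∧ cn B 2 2 f = 16192 ∧ cn B 2 3 f = 2048 := by
  obtain ⟨a, ha⟩ := ex2 G
  have h1 := m1m3 G ha
  have e1 := e24 G 1 ha hf
  have e2 := e24 G 2 ha hf
  have e3 := e24 G 3 ha hf
  have q6 := dcX_le G (k := 2) 5 (m := 24) (n := cn B 4 3 a) h6.sub
    (fun w hw => (k4_6 G (h6.sub hw) (O6a_K G h6 w hw)).ge)
    (fun b hb => by rw [c65 G hb, cn_c2 G 4 3 hb ha])
  have q8 := dcX_le G (k := 2) 6 (m := 8) (n := cn B 4 2 a) h8.sub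
    (fun w hw => (k4_8 G (h8.sub hw) (O8b_K G h8 w hw)).1.ge)
    (fun b hb => by
      rw [cn_refl G.L hb 8 6 4 (-2) (by norm_num) (by norm_num), cn_neg, cn_c2 G 4 2 hb ha])
  rw [h6.card, G.n2] at q6
  rw [h8.card, G.n2] at q8
  obtain ⟨s1, s2⟩ := cn_sum6 G 2 f (fun s hs => by have := b2 G.L hs hf (by norm_num); omega)
  rw [M4 G hf, cn_none (fun a ha => by have := b2 G.L ha hf (by norm_num); omega) (j := 5),
    cn_none (fun a ha => by have := b2 G.L ha hf (by norm_num); omega) (j := 6), G.n2] at s1 s2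
  rw [hf] at s2
  push_cast at s1 s2
  omega

end numbers2

section numbers3
variable {B : Matrix (Fin 24) (Fin 24) ℤ}

/-- numerical data -/
structure LNum (B : Matrix (Fin 24) (Fin 24) ℤ) : Prop where
  G : Good B
  M0 : ∀ f, ty B f = 4 → cn B 2 0 f = 65780
  M1 : ∀ f, ty B f = 4 → cn B 2 1 f = 47104
  M2 : ∀ f, ty B f = 4 → cn B 2 2 f = 16192
  M3 : ∀ f, ty B f = 4 → cn B 2 3 f = 2048

lemma LNum.c40 (N : LNum B) {a : LV} (ha : ty B a = 2) : cn B 4 0 a = 133204500 := by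
  obtain ⟨f, hf⟩ := ex4 N.G
  have := e24 N.G 0 ha hf
  rw [N.M0 f hf] at this; omega
lemma LNum.c41 (N : LNum B) {a : LV} (ha : ty B a = 2) : cn B 4 1 a = 95385600 := by
  obtain ⟨f, hf⟩ := ex4 N.G
  have := e24 N.G 1 ha hf
  rw [N.M1 f hf] at this; omega
lemma LNum.c42 (N : LNum B) {a : LV} (ha : ty B a = 2) : cn B 4 2 a = 32788800 := by
  obtain ⟨f, hf⟩ := ex4 N.G
  have := e24 N.G 2 ha hf
  rw [N.M2 f hf] at this; omega
lemma LNum.c43 (N : LNum B) {a : LV} (ha : ty B a = 2) : cn B 4 3 a = 4147200 := by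
  obtain ⟨f, hf⟩ := ex4 N.G
  have := e24 N.G 3 ha hf
  rw [N.M3 f hf] at this; omega
lemma LNum.c44 (N : LNum B) {a : LV} (ha : ty B a = 2) : cn B 4 4 a = 93150 := by
  obtain ⟨f, hf⟩ := ex4 N.G
  have := e24 N.G 4 ha hf
  rw [M4 N.G hf] at this; omega

lemma cn_self (hB : IsLeech B) {k : ℤ} (hk : 0 < k) {a : LV} (ha : ty B a = k) :
    cn B k (2 * k) a = 1 := by
  have h2 := two_ty hB a
  rw [cn, Set.ncard_eq_one]
  refine ⟨a, ?_⟩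
  ext b
  simp only [Set.mem_ofPred_eq, Set.mem_singleton_iff]
  constructor
  · rintro ⟨h1, h3⟩
    by_contra hne
    have := ip_le hB h1 ha hne
    omega
  · rintro rfl; exact ⟨ha, by omega⟩

lemma cn_near (hB : IsLeech B) {k j : ℤ} {a : LV} (ha : ty B a = k)
    (h1 : 2 * k - 2 < j) (h2 : j ≠ 2 * k) : cn B k j a = 0 := by
  have h3 := two_ty hB a
  refine cn_none fun b hb => ?_
  by_cases hne : b = a
  · rw [hne]; omega
  · have := ip_le hB hb ha hne; omega

lemma bself (hB : IsLeech B) {k : ℤ} (hk : 0 ≤ k) {a b : LV} (ha : ty B a = k) (hb : ty B b = k)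
    (h2 : 2 * k - 2 ≤ 6) (h3 : 2 * k ≤ 6) :
    -6 ≤ pairZ B b a ∧ pairZ B b a ≤ 6 := by
  have h4 := two_ty hB a
  constructor
  · by_cases hne : b = -a
    · rw [hne, ip_neg_left]; omega
    · have := ip_ge hB hb ha hne; omega
  · by_cases hne : b = a
    · rw [hne]; omega
    · have := ip_le hB hb ha hne; omega

lemma LNum.n22 (N : LNum B) {a : LV} (ha : ty B a = 2) :
    cn B 2 0 a = 93150 ∧ cn B 2 1 a = 47104 ∧ cn B 2 2 a = 4600 := by
  have h0 : cn B 2 0 a = 93150 := by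
    rw [cn_refl N.G.L ha 2 0 4 4 (by norm_num) (by norm_num), N.c44 ha]
  have h4 : cn B 2 4 a = 1 := cn_self N.G.L (k := 2) (by norm_num) ha
  obtain ⟨s1, s2⟩ := cn_sum6 N.G 2 a
    (fun s hs => bself N.G.L (by norm_num) ha hs (by norm_num) (by norm_num))
  rw [cn_near N.G.L ha (j := 3) (by norm_num) (by norm_num),
    cn_near N.G.L ha (j := 5) (by norm_num) (by norm_num),
    cn_near N.G.L ha (j := 6) (by norm_num) (by norm_num), h4, N.G.n2] at s1 s2
  rw [h0] at s1
  rw [ha] at s2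
  push_cast at s1 s2
  omega

lemma LNum.n32 (N : LNum B) {a : LV} (ha : ty B a = 2) :
    cn B 3 1 a = 4147200 ∧ cn B 3 2 a = 953856 ∧ cn B 3 3 a = 47104 := by
  have h1 : cn B 3 1 a = 4147200 := by
    rw [cn_refl N.G.L ha 3 1 4 3 (by norm_num) (by norm_num), N.c43 ha]
  have h3 : cn B 3 3 a = 47104 := by
    rw [cn_refl N.G.L ha 3 3 2 1 (by norm_num) (by norm_num), (N.n22 ha).2.1]
  have hb : ∀ s, ty B s = 3 → -3 ≤ pairZ B s a ∧ pairZ B s a ≤ 3 := fun s hs => by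
    rw [ip_comm N.G.L]; exact b2 N.G.L ha hs (by norm_num)
  obtain ⟨s1, s2⟩ := cn_sum6 N.G 3 a (fun s hs => by have := hb s hs; omega)
  have z : ∀ j : ℤ, 3 < j → cn B 3 j a = 0 := fun j hj =>
    cn_none fun s hs => by have := hb s hs; omega
  rw [z 4 (by norm_num), z 5 (by norm_num), z 6 (by norm_num), h1, h3, N.G.n3, ha] at s2
  push_cast at s2
  omega

/-- the vectors of type `x` whose class has minimal type `i` -/
def SK (B : Matrix (Fin 24) (Fin 24) ℤ) (x i : ℤ) : Set LV := {w | ty B w = x ∧ Kt B i w}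

lemma SK_sub (x i : ℤ) : SK B x i ⊆ Lam B x := fun _ h => h.1

lemma eq_of_card (G : Good B) {X Y : Set LV} {x : ℤ} (hY : Y ⊆ Lam B x) (h : X ⊆ Y)
    (hc : X.ncard = Y.ncard) : X = Y :=
  Set.eq_of_subset_of_ncard_le h hc.ge ((G.fin x).subset hY)

lemma LNum.S6a (N : LNum B) : (SK B 6 4).ncard = 518400 * 65520 := by
  have := dcX N.G (k := 2) 5 (m := 24) (n := 4147200) (SK_sub 6 4) (fun w hw => k4_6 N.G hw.1 hw.2)
    ?_ (fun a ha => by rw [c65 N.G ha, N.c43 ha])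
  · rw [N.G.n2] at this; omega
  · intro w hw hn
    have hk : Kt B 2 w := (k_6 N.G hw).resolve_right fun h => hn ⟨hw, h⟩
    rw [cn_fc N.G.L hw 2 5 4 (-2) (by norm_num) (by norm_num)]
    exact fc_empty N.G.L hk (by norm_num) (by norm_num) (by norm_num) _ _

lemma LNum.S6b (N : LNum B) : (SK B 6 2).ncard = 6900 * 65520 := by
  have := dcX N.G (k := 2) 6 (m := 2) (n := 4600) (SK_sub 6 2) (fun w hw => k2_6 N.G hw.1 hw.2)
    ?_ (fun a ha => by
      rw [cn_refl N.G.L ha 6 6 2 (-2) (by norm_num) (by norm_num), cn_neg, (N.n22 ha).2.2])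
  · rw [N.G.n2] at this; omega
  · intro w hw hn
    have hk : Kt B 4 w := (k_6 N.G hw).resolve_left fun h => hn ⟨hw, h⟩
    rw [cn_fc N.G.L hw 2 6 2 0 (by norm_num) (by norm_num)]
    exact fc_empty N.G.L hk (by norm_num) (by norm_num) (by norm_num) _ _

lemma z8 (G : Good B) {w : LV} (hw : ty B w = 8) (hn : ¬ Kt B 4 w) (j : ℤ) : fc B 4 w w j = 0 := by
  rcases kt_even G hw (y := 4) (by norm_num) with h | h | h
  · exact fc_empty G.L h (by norm_num) (by norm_num) (by norm_num) _ _
  · exact fc_empty G.L h (by norm_num) (by norm_num) (by norm_num) _ _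
  · exact absurd h hn

lemma LNum.S8b (N : LNum B) : (SK B 8 4).ncard = 12295800 * 65520 := by
  have := dcX N.G (k := 2) 6 (m := 8) (n := 32788800) (SK_sub 8 4)
    (fun w hw => (k4_8 N.G hw.1 hw.2).1)
    ?_ (fun a ha => by
      rw [cn_refl N.G.L ha 8 6 4 (-2) (by norm_num) (by norm_num), cn_neg, N.c42 ha])
  · rw [N.G.n2] at this; omega
  · intro w hw hn
    rw [cn_fc N.G.L hw 2 6 4 (-4) (by norm_num) (by norm_num)]
    exact z8 N.G hw (fun h => hn ⟨hw, h⟩) _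

lemma LNum.U2 (N : LNum B) {t : LV} (ht : ty B t = 3) : cn B 3 2 t = 1536975 := by
  have := dcX N.G (k := 3) 8 (m := 32) (n := cn B 3 2 t) (SK_sub 8 4)
    (fun w hw => (k4_8 N.G hw.1 hw.2).2)
    ?_ (fun a ha => by
      rw [cn_refl N.G.L ha 8 8 3 (-2) (by norm_num) (by norm_num), cn_neg, cn_c3 N.G 3 2 ha ht])
  · rw [N.G.n3, N.S8b] at this; omega
  · intro w hw hn
    rw [cn_fc N.G.L hw 3 8 4 0 (by norm_num) (by norm_num)]
    exact z8 N.G hw (fun h => hn ⟨hw, h⟩) _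

lemma LNum.V4 (N : LNum B) {f : LV} (hf : ty B f = 4) : cn B 3 4 f = 64768 := by
  obtain ⟨t, ht⟩ := ex3 N.G
  have h1 := e34 N.G 4 ht hf
  have h2 := N.U2 ht
  rw [cn_refl N.G.L ht 3 2 4 4 (by norm_num) (by norm_num)] at h2
  omega

lemma LNum.U4 (N : LNum B) {t : LV} (ht : ty B t = 3) : cn B 3 4 t = 11178 := by
  obtain ⟨a, ha⟩ := ex2 N.G
  rw [cn_refl N.G.L ht 3 4 2 2 (by norm_num) (by norm_num)]
  have := e23 N.G 2 ha ht
  rw [(N.n32 ha).2.1] at this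
  omega

lemma k3_5 (G : Good B) {w : LV} (hw : ty B w = 5) : cn B 2 5 w = 2 := by
  rw [cn_fc G.L hw 2 5 3 0 (by norm_num) (by norm_num)]
  obtain ⟨s, h1, h2⟩ := kt_odd G hw (y := 2) (by norm_num)
  refine fc_two G.L (by norm_num) h1 h2 (by norm_num) ?_
  obtain ⟨n1, n2⟩ := ne_of_ty h1 hw (by norm_num)
  obtain ⟨α, β, h1, h2, h3, h4⟩ := half_cases G.L h2 n1 n2
  omega

lemma k3_7 (G : Good B) {w : LV} (hw : ty B w = 7) : cn B 2 6 w = 1 := by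
  rw [cn_fc G.L hw 2 6 3 (-2) (by norm_num) (by norm_num), fc_neg]
  obtain ⟨s, h1, h2⟩ := kt_odd G hw (y := 3) (by norm_num)
  refine fc_one G.L (by norm_num) h1 h2 (by norm_num) ?_
  obtain ⟨n1, n2⟩ := ne_of_ty h1 hw (by norm_num)
  obtain ⟨α, β, h1, h2, h3, h4⟩ := half_cases G.L h2 n1 n2
  omega

lemma LNum.S5 (N : LNum B) : (Lam B 5).ncard = 70656 * 65520 := by
  have := dcL N.G (x := 5) (k := 2) 5 (m := 2) (n := 47104) (fun w hw => k3_5 N.G hw)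
    (fun a ha => by
      rw [cn_refl N.G.L ha 5 5 2 (-1) (by norm_num) (by norm_num), cn_neg, (N.n22 ha).2.1])
  rw [N.G.n2] at this; omega

lemma LNum.S7 (N : LNum B) : (Lam B 7).ncard = 2861568 * 65520 := by
  have := dcL N.G (x := 7) (k := 2) 6 (m := 1) (n := 953856) (fun w hw => k3_7 N.G hw)
    (fun a ha => by
      rw [cn_refl N.G.L ha 7 6 3 (-2) (by norm_num) (by norm_num), cn_neg, (N.n32 ha).2.1])
  rw [N.G.n2] at this; omega

end numbers3

section parity
variable {B : Matrix (Fin 24) (Fin 24) ℤ}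

/-- number of classes with a property -/
def cc (P : LV → Prop) : ℕ := {x : Fin 24 → ZMod 2 | ∃ v, cls v = x ∧ P v}.ncard

lemma cc_shift (P : LV → Prop) (u : LV) : cc (fun v => P (v + u)) = cc P := by
  refine ncard_bij (fun x => x + cls u) (fun x => x - cls u) ?_ ?_ (by simp) (by simp)
  · rintro x ⟨v, rfl, h⟩
    exact ⟨v + u, cls_add v u, h⟩
  · rintro x ⟨v, rfl, h⟩
    refine ⟨v - u, ?_, by simpa using h⟩
    rw [eq_sub_iff_add_eq, ← cls_add]; simp

lemma cc_split (P Q : LV → Prop) (hP : ∀ u v, cg u v → P u → P v) (hQ : ∀ u v, cg u v → Q u → Q v) :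
    cc (fun v => Q v ∧ P v) + cc (fun v => Q v ∧ ¬ P v) = cc Q := by
  unfold cc
  rw [← Set.ncard_union_eq _ (Set.toFinite _) (Set.toFinite _)]
  · congr 1; ext x
    constructor
    · rintro (⟨v, h1, h2⟩ | ⟨v, h1, h2⟩)
      · exact ⟨v, h1, h2.1⟩
      · exact ⟨v, h1, h2.1⟩
    · rintro ⟨v, h1, h2⟩
      by_cases h : P v
      · exact Or.inl ⟨v, h1, h2, h⟩
      · exact Or.inr ⟨v, h1, h2, h⟩
  · rw [Set.disjoint_left]
    rintro x ⟨v, h1, h2, h3⟩ ⟨u, h4, h5, h6⟩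
    exact h6 (hP v u (cls_eq.mp (h1.trans h4.symm)) h3)

lemma cc_true : cc (fun _ => True) = 16777216 := by
  rw [cc, show {x : Fin 24 → ZMod 2 | ∃ v, cls v = x ∧ True} = Set.univ from ?_, Set.ncard_univ, cls_card]
  ext x; simpa using cls_surj x

lemma cc_congr {P Q : LV → Prop} (h : ∀ v, P v ↔ Q v) : cc P = cc Q := by
  rw [show P = Q from funext fun v => propext (h v)]

lemma par3 (G : Good B) {t v0 : LV} (hv : pairZ B v0 t % 2 = 1) :
    {b | ty B b = 3 ∧ (pairZ B b t + ty B t) % 2 = 1}.ncard = 8388608 := by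
  have hD : ∀ u v, cg u v → (pairZ B u t + ty B t) % 2 = 1 → (pairZ B v t + ty B t) % 2 = 1 := by
    intro u v h h1
    obtain ⟨r, hr⟩ := cg_parity (B := B) h t
    rw [ip_comm G.L t u, ip_comm G.L t v] at hr
    omega
  have hO : ∀ u v, cg u v → ty B u % 2 = 1 → ty B v % 2 = 1 := by
    intro u v h h1
    obtain ⟨r, hr⟩ := cg_ty G.L h
    omega
  have c1 := cc_split (fun v => (pairZ B v t + ty B t) % 2 = 1) (fun _ => True) hD (fun _ _ _ h => h)
  rw [cc_true, ← cc_shift (fun v => True ∧ ¬ (pairZ B v t + ty B t) % 2 = 1) v0] at c1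
  rw [cc_congr (Q := fun v => (pairZ B v t + ty B t) % 2 = 1) (fun v => by simp),
    cc_congr (P := fun v => True ∧ ¬ (pairZ B (v + v0) t + ty B t) % 2 = 1)
      (Q := fun v => (pairZ B v t + ty B t) % 2 = 1) (fun v => by
        rw [ip_add_left, true_and]; omega)] at c1
  have c2 := cc_split (fun v => ty B v % 2 = 1) (fun v => (pairZ B v t + ty B t) % 2 = 1) hO hD
  rw [← cc_shift (fun v => (pairZ B v t + ty B t) % 2 = 1 ∧ ¬ ty B v % 2 = 1) t,
    cc_congr (P := fun v => (pairZ B (v + t) t + ty B t) % 2 = 1 ∧ ¬ ty B (v + t) % 2 = 1)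
      (Q := fun v => (pairZ B v t + ty B t) % 2 = 1 ∧ ty B v % 2 = 1) (fun v => by
        rw [ip_add_left, ty_add G.L, two_ty G.L t]; omega)] at c2
  have c3 : cc (fun v => (pairZ B v t + ty B t) % 2 = 1 ∧ ty B v % 2 = 1) = 4194304 := by omega
  have := dc (G.fn 3 (fun b => (pairZ B b t + ty B t) % 2 = 1))
    (Set.toFinite {x : Fin 24 → ZMod 2 | ∃ v, cls v = x ∧
      ((pairZ B v t + ty B t) % 2 = 1 ∧ ty B v % 2 = 1)})
    (fun b x => cls b = x) (m := 1) (n := 2) ?_ ?_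
  · unfold cc at c3; rw [c3] at this; omega
  · rintro b ⟨h1, h2⟩
    rw [Set.ncard_eq_one]
    refine ⟨cls b, ?_⟩
    ext x
    simp only [Set.mem_ofPred_eq, Set.mem_singleton_iff]
    exact ⟨fun h => h.2.symm, fun h => ⟨⟨b, h.symm, h2, by omega⟩, h.symm⟩⟩
  · rintro x ⟨v, rfl, h1, h2⟩
    obtain ⟨s, hs, hc⟩ := kt_odd G (w := v) rfl (y := ty B v / 2) (by omega)
    refine Eq.trans ?_ (fc_two G.L (a := 0) (by norm_num) hs hc (by norm_num) (ip_zero_right s))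
    unfold fc
    congr 1; ext b
    constructor
    · rintro ⟨⟨h3, h4⟩, h5⟩; exact ⟨h3, cls_eq.mp h5, ip_zero_right b⟩
    · rintro ⟨h3, h4, _⟩; exact ⟨⟨h3, hD _ _ (cg_symm h4) h1⟩, cls_eq.mpr h4⟩

/-- type 3 against type 3 -/
lemma LNum.U (N : LNum B) {t : LV} (ht : ty B t = 3) :
    cn B 3 0 t = 5292300 ∧ cn B 3 1 t = 3934656 ∧ cn B 3 3 t = 257600 := by
  have G := N.G
  have h6 : cn B 3 6 t = 1 := cn_self G.L (k := 3) (by norm_num) ht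
  have h5 : cn B 3 5 t = 0 := cn_near G.L ht (by norm_num) (by norm_num)
  have hb : ∀ s, ty B s = 3 → -6 ≤ pairZ B s t ∧ pairZ B s t ≤ 6 := 
    fun s hs => bself G.L (by norm_num) ht hs (by norm_num) (by norm_num)
  obtain ⟨s1, s2⟩ := cn_sum6 G 3 t hb
  have hv : ∃ v0, pairZ B v0 t % 2 = 1 := by
    obtain ⟨a, ha⟩ := ex2 G
    have h := e23 G 1 ha ht
    rw [(N.n32 ha).1] at h
    have : (({a | ty B a = 2 ∧ pairZ B a t = 1}) : Set LV).Nonempty := by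
      rw [← Set.ncard_pos (G.fn 2 _)]; unfold cn at h; omega
    obtain ⟨v, h1, h2⟩ := this
    exact ⟨v, by omega⟩
  obtain ⟨v0, hv⟩ := hv
  have hp := par3 G hv
  have h7 := sum_cn G 3 t 6 (fun j => if (j + 3) % 2 = 1 then 1 else 0) hb
  rw [se6 _ (fun j => by
    rw [cn_neg]; congr 2; apply propext; omega)] at h7
  rw [Finset.sum_ite, Finset.sum_const_zero, add_zero, Finset.sum_const] at h7
  have h8 : ((G.fin 3).toFinset.filter (fun a => (pairZ B a t + 3) % 2 = 1)).card = 8388608 := by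
    rw [← hp, ← Set.ncard_coe_finset]
    congr 1; ext b; simp [Lam, ht]
  rw [h8, N.U2 ht, N.U4 ht, h6] at h7
  rw [N.U2 ht, N.U4 ht, h5, h6, G.n3] at s1 s2
  rw [ht] at s2
  norm_num at h7
  push_cast at s1 s2
  omega

lemma par34 (N : LNum B) {f : LV} (hf : ty B f = 4) :
    {b | ty B b = 3 ∧ pairZ B b f % 2 = 0}.ncard = 8384512 := by
  have G := N.G
  have hv : ∃ v0, pairZ B v0 f % 2 = 1 := by
    have h := N.M1 f hf
    have : (({a | ty B a = 2 ∧ pairZ B a f = 1}) : Set LV).Nonempty := by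
      rw [← Set.ncard_pos (G.fn 2 _)]; unfold cn at h; omega
    obtain ⟨v, h1, h2⟩ := this
    exact ⟨v, by omega⟩
  obtain ⟨v0, hv⟩ := hv
  have hp := par3 G hv
  have h1 : {b | ty B b = 3 ∧ pairZ B b f % 2 = 0} ∪ {b | ty B b = 3 ∧ (pairZ B b f + ty B f) % 2 = 1}
      = Lam B 3 := by
    ext b
    simp only [Set.mem_union, Set.mem_ofPred_eq, Lam]
    omega
  have h2 := Set.ncard_union_eq (s := {b | ty B b = 3 ∧ pairZ B b f % 2 = 0})
    (t := {b | ty B b = 3 ∧ (pairZ B b f + ty B f) % 2 = 1}) (by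
      rw [Set.disjoint_left]
      rintro b ⟨_, h⟩ ⟨_, h'⟩
      omega) (G.fn 3 _) (G.fn 3 _)
  rw [h1, hp, G.n3] at h2
  omega

end parity

section flipping
variable {B : Matrix (Fin 24) (Fin 24) ℤ}

/-- a half frame adapted to `w` of type 6 -/
structure HF (B : Matrix (Fin 24) (Fin 24) ℤ) (w : LV) (H : Finset LV) : Prop where
  mem : ∀ f ∈ H, ty B f = 4 ∧ cg f w
  all : ∀ f, ty B f = 4 → cg f w → f ∈ H ∨ -f ∈ H
  ne : H.Nonempty
  s1 : ∀ a, ∑ f ∈ H, pairZ B f a = 4 * pairZ B a w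
  s2 : ∀ a, ∑ f ∈ H, pairZ B f a ^ 2 = 16 * ty B a
  ext : ∀ a b, (∀ f ∈ H, pairZ B f a = pairZ B f b) → a = b
  half : ∀ I, I ⊆ H → Even I.card → ∃ h, ∀ g ∈ H, (g ∈ I → pairZ B g h = 4) ∧ (g ∉ I → pairZ B g h = 0)
  par : ∀ a, ∀ f ∈ H, ∃ r, pairZ B f a = pairZ B a w + 2 * r

lemma hf_ex (G : Good B) {w : LV} (hw : ty B w = 6) (hK : Kt B 4 w) : ∃ H, HF B w H := by
  classical
  obtain ⟨h24, hc⟩ := s6a G hw hK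
  have hfin : {s | ty B s = 4 ∧ cg s w ∧ pairZ B s w = 2}.Finite := G.fn 4 _
  rw [fc, Set.ncard_eq_toFinset_card _ hfin] at hc
  set H := hfin.toFinset with hH
  have m : ∀ f ∈ H, ty B f = 4 ∧ cg f w ∧ pairZ B f w = 2 := fun f hf => by simpa [hH] using hf
  have ho : ∀ f ∈ H, ∀ g ∈ H, f ≠ g → pairZ B f g = 0 := by
    intro f hf g hg hne
    refine fr_orth G.L (m f hf).1 (m g hg).1 (cg_trans (m f hf).2.1 (cg_symm (m g hg).2.1)) hne ?_
    intro h
    have h1 := (m f hf).2.2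
    have h2 := (m g hg).2.2
    rw [h, ip_neg_left] at h1; omega
  have hp := parseval G.L H hc (fun f hf => (m f hf).1) ho
  refine ⟨H, fun f hf => ⟨(m f hf).1, (m f hf).2.1⟩, ?_, ?_, ?_, ?_, ?_, ?_, ?_⟩
  · intro f h1 h2
    rcases h24 f h1 h2 with h | h
    · left; simp [hH, h1, h2, h]
    · right
      simp only [hH, Set.Finite.mem_toFinset, Set.mem_ofPred_eq]
      exact ⟨by rw [ty_neg, h1], cg_neg h2, by rw [ip_neg_left, h]; simp⟩
  · rw [← Finset.card_pos]; omega
  · intro a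
    have := hp a w
    rw [Finset.sum_congr rfl (g := fun f => pairZ B f a * 2)
      (fun f hf => by rw [(m f hf).2.2]), ← Finset.sum_mul] at this
    omega
  · intro a
    have := hp a a
    rw [two_ty G.L] at this
    rw [Finset.sum_congr rfl (fun f _ => sq (pairZ B f a))]
    omega
  · intro a b h
    have := hp (a - b) (a - b)
    rw [Finset.sum_eq_zero, two_ty G.L] at this
    · exact sub_eq_zero.mp (ty_eq_zero G.L (by omega))
    · intro f hf; rw [ip_sub_right, h f hf]; ring
  · rintro I hI ⟨r, hr⟩
    have hx : ∀ f ∈ H, ∃ x : LV, f = w + (2 : ℤ) • x := fun f hf => (m f hf).2.1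
    choose! y hy using hx
    refine ⟨(r : ℤ) • w + ∑ f ∈ I, y f, fun g hg => ?_⟩
    have h2 : (2 : ℤ) • ((r : ℤ) • w + ∑ f ∈ I, y f) = ∑ f ∈ I, f := by
      rw [Finset.sum_congr rfl (fun f hf => hy f (hI hf)), Finset.sum_add_distrib, Finset.sum_const,
        hr, ← Finset.smul_sum, smul_add, ← smul_assoc, ← natCast_zsmul w]
      congr 2
      simp; ring
    have h3 : 2 * pairZ B g ((r : ℤ) • w + ∑ f ∈ I, y f) = ∑ f ∈ I, pairZ B f g := by
      rw [← ip_smul_right, h2, ip_comm G.L, ip_sum_left]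
    generalize (r : ℤ) • w + ∑ f ∈ I, y f = u at h3 ⊢
    constructor
    · intro hgI
      rw [Finset.sum_eq_single g, two_ty G.L, (m g hg).1] at h3
      · omega
      · intro f hf hne; exact ho f (hI hf) g hg hne
      · intro h; exact absurd hgI h
    · intro hgI
      rw [Finset.sum_eq_zero] at h3
      · omega
      · intro f hf; exact ho f (hI hf) g hg (by rintro rfl; exact hgI hf)
  · intro a f hf
    obtain ⟨r, hr⟩ := cg_parity (B := B) (m f hf).2.1 a
    exact ⟨r, by rw [ip_comm G.L]; exact hr⟩

lemma even_subsets {α : Type*} [DecidableEq α] (J : Finset α) (n : ℕ) (h : J.card = n + 1) :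
    {I : Finset α | I ⊆ J ∧ Even I.card}.ncard = 2 ^ n := by
  have hne : J.Nonempty := by rw [← Finset.card_pos]; omega
  have h1 := Finset.sum_powerset_neg_one_pow_card_of_nonempty hne
  have h2 := Finset.card_filter_add_card_filter_not (s := J.powerset) (fun I => Even I.card)
  rw [Finset.card_powerset, h] at h2
  rw [← Finset.sum_filter_add_sum_filter_not J.powerset (fun I => Even I.card),
    Finset.sum_congr rfl (g := fun _ => (1 : ℤ)) (fun I hI => Even.neg_one_pow (Finset.mem_filter.mp hI).2),
    Finset.sum_congr (s₁ := J.powerset.filter (fun I => ¬ Even I.card)) rfl (g := fun _ => (-1 : ℤ))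
      (fun I hI => Odd.neg_one_pow (Nat.not_even_iff_odd.mp (Finset.mem_filter.mp hI).2)),
    Finset.sum_const, Finset.sum_const] at h1
  have h3 : {I : Finset α | I ⊆ J ∧ Even I.card} = ((J.powerset.filter (fun I => Even I.card) : Finset (Finset α)) : Set (Finset α)) := by
    ext I; simp
  rw [h3, Set.ncard_coe_finset]
  simp at h1
  rw [pow_succ] at h2
  simp only [Nat.not_even_iff_odd] at h2
  omega

/-- vectors with all frame products in `{0,±2}` -/
def ZZ (B : Matrix (Fin 24) (Fin 24) ℤ) (w : LV) (k : ℤ) : Set LV :=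
  {a | ty B a = k ∧ ∀ f, ty B f = 4 → cg f w → pairZ B f a = 0 ∨ pairZ B f a = 2 ∨ pairZ B f a = -2}

lemma zz_iff {w : LV} {H : Finset LV} (h : HF B w H) {k : ℤ} {a : LV} : a ∈ ZZ B w k ↔
    ty B a = k ∧ ∀ f ∈ H, pairZ B f a = 0 ∨ pairZ B f a = 2 ∨ pairZ B f a = -2 := by
  constructor
  · rintro ⟨h1, h2⟩; exact ⟨h1, fun f hf => h2 f (h.mem f hf).1 (h.mem f hf).2⟩
  · rintro ⟨h1, h2⟩
    refine ⟨h1, fun f h3 h4 => ?_⟩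
    rcases h.all f h3 h4 with h5 | h5
    · exact h2 f h5
    · have := h2 _ h5; rw [ip_neg_left] at this; omega

lemma pp_iff {w : LV} {H : Finset LV} (h : HF B w H) {k : ℤ} {a : LV} :
    (ty B a = k ∧ pairZ B a w = 2 * k) ↔
    ty B a = k ∧ ∀ f ∈ H, pairZ B f a = 0 ∨ pairZ B f a = 2 := by
  have e : ∑ f ∈ H, (pairZ B f a ^ 2 - 2 * pairZ B f a) = 16 * ty B a - 8 * pairZ B a w := by
    rw [Finset.sum_sub_distrib, ← Finset.mul_sum, h.s1, h.s2]; ring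
  constructor
  · rintro ⟨h1, h2⟩
    refine ⟨h1, ?_⟩
    rw [h1, h2, show 16 * k - 8 * (2 * k) = 0 by ring, Finset.sum_eq_zero_iff_of_nonneg] at e
    · intro f hf
      have h3 := e f hf
      have : pairZ B f a * (pairZ B f a - 2) = 0 := by linarith
      rcases mul_eq_zero.mp this with h | h <;> omega
    · intro f hf
      obtain ⟨r, hr⟩ := h.par a f hf
      have h4 : pairZ B f a = 2 * (k + r) := by omega
      rw [h4]
      have : (2 * (k + r)) ^ 2 - 2 * (2 * (k + r)) = 4 * ((k + r) * (k + r - 1)) := by ring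
      rw [this]
      rcases le_or_gt 1 (k + r) with h5 | h5
      · have := mul_nonneg (show 0 ≤ k + r by omega) (show 0 ≤ k + r - 1 by omega); omega
      · have := mul_nonneg_of_nonpos_of_nonpos (show k + r ≤ 0 by omega) (show k + r - 1 ≤ 0 by omega); omega
  · rintro ⟨h1, h2⟩
    refine ⟨h1, ?_⟩
    rw [Finset.sum_eq_zero] at e
    · omega
    · intro f hf; rcases h2 f hf with h | h <;> rw [h] <;> norm_num

lemma supp_card {w : LV} {H : Finset LV} (h : HF B w H) {k : ℤ} {a : LV} (ha : a ∈ ZZ B w k) :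
    ((H.filter (fun f => pairZ B f a ≠ 0)).card : ℤ) = 4 * k ∧
    Even (H.filter (fun f => pairZ B f a = -2)).card := by
  classical
  obtain ⟨h1, h2⟩ := (zz_iff h).mp ha
  have e1 := h.s1 a
  have e2 := h.s2 a
  have c1 : ((H.filter (fun f => pairZ B f a ≠ 0)).card : ℤ) = ∑ f ∈ H, if pairZ B f a ≠ 0 then 1 else 0 := by
    rw [Finset.card_filter]; push_cast; rfl
  have c2 : ((H.filter (fun f => pairZ B f a = -2)).card : ℤ) = ∑ f ∈ H, if pairZ B f a = -2 then 1 else 0 := by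
    simp
  have e3 : ∑ f ∈ H, pairZ B f a ^ 2 = 4 * ∑ f ∈ H, (if pairZ B f a ≠ 0 then (1 : ℤ) else 0) := by
    rw [Finset.mul_sum]
    refine Finset.sum_congr rfl fun f hf => ?_
    rcases h2 f hf with h | h | h <;> rw [h] <;> norm_num
  have e4 : ∑ f ∈ H, pairZ B f a = 2 * ∑ f ∈ H, (if pairZ B f a ≠ 0 then (1 : ℤ) else 0) -
      4 * ∑ f ∈ H, (if pairZ B f a = -2 then (1 : ℤ) else 0) := by
    rw [Finset.mul_sum, Finset.mul_sum, ← Finset.sum_sub_distrib]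
    refine Finset.sum_congr rfl fun f hf => ?_
    rcases h2 f hf with h | h | h <;> rw [h] <;> norm_num
  obtain ⟨f, hf⟩ := h.ne
  obtain ⟨r, hr⟩ := h.par a f hf
  have h3 := h2 f hf
  rw [← c1] at e3 e4
  rw [← c2] at e4
  refine ⟨by omega, ?_⟩
  rw [Nat.even_iff]
  omega

lemma flip_card (G : Good B) {w : LV} {H : Finset LV} (h : HF B w H) (k n : ℕ) (hk : 4 * k = n + 1) :
    (ZZ B w k).ncard = cn B k (2 * k) w * 2 ^ n := by
  classical
  have := dc (X := ZZ B w k) (Y := {a | ty B a = k ∧ pairZ B a w = 2 * k}) (G.fn k _) (G.fn k _)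
    (fun a b => ∀ f ∈ H, pairZ B f b ^ 2 = pairZ B f a ^ 2) (m := 1) (n := 2 ^ n) ?_ ?_
  · rw [mul_one] at this; exact this
  · intro a ha
    obtain ⟨q1, q2⟩ := supp_card h ha
    obtain ⟨h1, h2⟩ := (zz_iff h).mp ha
    obtain ⟨v, hv⟩ := h.half _ (Finset.filter_subset _ _) q2
    have hb : ∀ f ∈ H, (pairZ B f (a + v) = 0 ∨ pairZ B f (a + v) = 2) ∧
        pairZ B f (a + v) ^ 2 = pairZ B f a ^ 2 := by
      intro f hf
      have h3 := hv f hf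
      rw [Finset.mem_filter] at h3
      rw [ip_add_right]
      rcases h2 f hf with h4 | h4 | h4
      · rw [h3.2 (by omega), h4]; norm_num
      · rw [h3.2 (by omega), h4]; norm_num
      · rw [h3.1 ⟨hf, h4⟩, h4]; norm_num
    have ht : ty B (a + v) = k := by
      have e1 := h.s2 a
      have e2 := h.s2 (a + v)
      rw [Finset.sum_congr rfl (fun f hf => (hb f hf).2)] at e2
      omega
    rw [Set.ncard_eq_one]
    refine ⟨a + v, ?_⟩
    ext b
    simp only [Set.mem_ofPred_eq, Set.mem_singleton_iff]
    rw [pp_iff h]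
    constructor
    · rintro ⟨⟨h3, h4⟩, h5⟩
      refine h.ext _ _ fun f hf => ?_
      have h6 := (hb f hf).2
      rw [← h5 f hf] at h6
      rcases h4 f hf with h7 | h7 <;> rcases (hb f hf).1 with h8 | h8 <;> rw [h7, h8] at h6 ⊢ <;> norm_num at h6
    · rintro rfl
      exact ⟨⟨ht, fun f hf => (hb f hf).1⟩, fun f hf => (hb f hf).2⟩
  · intro b hb'
    obtain ⟨h1, h2⟩ := (pp_iff h).mp hb'
    have hbZ : b ∈ ZZ B w k := (zz_iff h).mpr ⟨h1, fun f hf => by have := h2 f hf; omega⟩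
    set J := H.filter (fun f => pairZ B f b ≠ 0) with hJ
    have hJc : J.card = n + 1 := by have := (supp_card h hbZ).1; rw [← hJ] at this; omega
    rw [← even_subsets J n hJc]
    have hJH : J ⊆ H := Finset.filter_subset _ _
    have hex : ∀ I : Finset LV, ∃ v, (I ⊆ J ∧ Even I.card) → ∀ g ∈ H, (g ∈ I → pairZ B g v = 4) ∧ (g ∉ I → pairZ B g v = 0) := by
      intro I
      by_cases hI : I ⊆ J ∧ Even I.card
      · obtain ⟨v, hv⟩ := h.half I (hI.1.trans hJH) hI.2
        exact ⟨v, fun _ => hv⟩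
      · exact ⟨0, fun h => absurd h hI⟩
    choose v hv using hex
    have key : ∀ I, I ⊆ J ∧ Even I.card → ∀ f ∈ H, (f ∈ I → pairZ B f b = 2 ∧ pairZ B f (b - v I) = -2) ∧
        (f ∉ I → pairZ B f (b - v I) = pairZ B f b) := by
      intro I hI f hf
      have h3 := hv I hI f hf
      rw [ip_sub_right]
      constructor
      · intro hfI
        have h4 := (Finset.mem_filter.mp (hI.1 hfI)).2
        have h5 := h2 f hf
        have := h3.1 hfI
        omega
      · intro hfI; have := h3.2 hfI; omega
    symm
    refine Set.ncard_congr (fun I _ => b - v I) ?_ ?_ ?_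
    · intro I hI
      have hsq : ∀ f ∈ H, pairZ B f b ^ 2 = pairZ B f (b - v I) ^ 2 := by
        intro f hf
        obtain ⟨k1, k2⟩ := key I hI f hf
        by_cases hfI : f ∈ I
        · rw [(k1 hfI).1, (k1 hfI).2]; norm_num
        · rw [k2 hfI]
      refine ⟨(zz_iff h).mpr ⟨?_, ?_⟩, hsq⟩
      · have e1 := h.s2 b
        have e2 := h.s2 (b - v I)
        rw [Finset.sum_congr rfl hsq] at e1
        omega
      · intro f hf
        obtain ⟨k1, k2⟩ := key I hI f hf
        by_cases hfI : f ∈ I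
        · have := k1 hfI; omega
        · have := k2 hfI; have := h2 f hf; omega
    · intro I I' hI hI' heq
      have sub : ∀ I I' : Finset LV, (I ⊆ J ∧ Even I.card) → (I' ⊆ J ∧ Even I'.card) → b - v I = b - v I' → I ⊆ I' := by
        intro I I' hI hI' heq f hf
        have hfH := hJH (hI.1 hf)
        have k1 := (key I hI f hfH).1 hf
        by_contra hn
        have k2 := (key I' hI' f hfH).2 hn
        rw [← heq] at k2; omega
      exact Finset.Subset.antisymm (sub I I' hI hI' heq) (sub I' I hI' hI heq.symm)
    · rintro a ⟨haZ, hab⟩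
      obtain ⟨h3, h4⟩ := (zz_iff h).mp haZ
      have hI : H.filter (fun f => pairZ B f a = -2) ⊆ J ∧ Even (H.filter (fun f => pairZ B f a = -2)).card := by
        refine ⟨?_, (supp_card h haZ).2⟩
        intro f hf
        rw [Finset.mem_filter] at hf
        rw [hJ, Finset.mem_filter]
        refine ⟨hf.1, fun h0 => ?_⟩
        have := hab f hf.1
        rw [h0, hf.2] at this; norm_num at this
      refine ⟨_, hI, ?_⟩
      refine h.ext _ _ fun f hf => ?_
      obtain ⟨k1, k2⟩ := key _ hI f hf
      by_cases hfI : f ∈ H.filter (fun f => pairZ B f a = -2)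
      · rw [(k1 hfI).2, (Finset.mem_filter.mp hfI).2]
      · rw [k2 hfI]
        rw [Finset.mem_filter] at hfI
        have h5 := hab f hf
        have h6 : pairZ B f a ≠ -2 := fun h => hfI ⟨hf, h⟩
        rcases h4 f hf with h7 | h7 | h7 <;> rcases h2 f hf with h8 | h8 <;> rw [h7, h8] at h5 ⊢ <;> norm_num at h5
        · exact absurd h7 h6

end flipping

section six
variable {B : Matrix (Fin 24) (Fin 24) ℤ}

lemma fr48 (G : Good B) {w : LV} (hK : Kt B 4 w) : {f | ty B f = 4 ∧ cg f w}.ncard = 48 := by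
  obtain ⟨s, h1, h2⟩ := hK
  rw [← G.fr s h1]
  congr 1; ext f
  exact ⟨fun h => ⟨h.1, cg_trans h.2 (cg_symm h2)⟩, fun h => ⟨h.1, cg_trans h.2 h2⟩⟩

lemma fr_even (G : Good B) {a f g : LV} (h : cg g f) (he : pairZ B a f % 2 = 0) :
    pairZ B g a % 2 = 0 := by
  obtain ⟨r, hr⟩ := cg_parity (B := B) h a
  rw [ip_comm G.L]; omega

lemma LNum.w24 (N : LNum B) {w : LV} (hw : ty B w = 6) (hK : Kt B 4 w) : cn B 2 4 w = 759 := by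
  have G := N.G
  obtain ⟨H, hH⟩ := hf_ex G hw hK
  have h1 := flip_card G hH 2 7 (by norm_num)
  have h2 := dc (X := ZZ B w 2) (Y := {f | ty B f = 4 ∧ cg f w}) (G.fn 2 _) (G.fn 4 _)
    (fun a f => pairZ B f a = 2) (m := 8) (n := 16192) ?_ ?_
  · rw [fr48 G hK] at h2
    push_cast at h1
    rw [h1] at h2
    omega
  · intro a ha
    obtain ⟨ha1, ha2⟩ := ha
    have e : {y | y ∈ {f | ty B f = 4 ∧ cg f w} ∧ pairZ B y a = 2}.ncard = fc B 4 w a 2 := by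
      unfold fc; congr 1; ext y; simp only [Set.mem_ofPred_eq]; tauto
    rw [e]
    have hs := (fc_sum6 G hK a (fun s h1 h2 => by have := ha2 s h1 h2; omega)).2
    have z : ∀ j : ℤ, j ≠ 0 → j ≠ 2 → j ≠ -2 → fc B 4 w a j = 0 := by
      intro j j0 j1 j2
      refine fc_none fun s h1 h2 h3 => ?_
      have := ha2 s h1 h2; omega
    rw [z 1 (by norm_num) (by norm_num) (by norm_num), z 3 (by norm_num) (by norm_num) (by norm_num),
      z 4 (by norm_num) (by norm_num) (by norm_num), z 5 (by norm_num) (by norm_num) (by norm_num),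
      z 6 (by norm_num) (by norm_num) (by norm_num), ha1] at hs
    push_cast at hs; omega
  · rintro f ⟨hf1, hf2⟩
    rw [← N.M2 f hf1, cn]
    congr 1; ext a
    simp only [Set.mem_ofPred_eq]
    constructor
    · rintro ⟨⟨h3, h4⟩, h5⟩; exact ⟨h3, by rw [ip_comm G.L]; exact h5⟩
    · rintro ⟨h3, h5⟩
      have h5' : pairZ B f a = 2 := by rw [ip_comm G.L]; exact h5
      refine ⟨⟨h3, fun g hg1 hg2 => ?_⟩, h5'⟩
      have hgf := cg_trans hg2 (cg_symm hf2)
      have he := fr_even G hgf (a := a) (by omega)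
      have hb := b2 G.L h3 hg1 (by norm_num)
      rw [ip_comm G.L a g] at hb
      have key : ∀ g, ty B g = 4 → cg g f → pairZ B g a ≠ 4 := by
        intro g hg1 hgf h6
        have hs : ty B ((2 : ℤ) • a - g) = 4 := by
          rw [ty_sub G.L, ty_two G.L, ip_smul_left, ip_comm G.L a g]; omega
        have hc : cg ((2 : ℤ) • a - g) f := by
          obtain ⟨x, hx⟩ := cg_neg hgf
          exact ⟨x + a, by rw [sub_eq_add_neg, hx, smul_add]; abel⟩
        have q : ∀ s, ty B s = 4 → cg s f → pairZ B s f % 8 = 0 := by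
          intro s hs hc
          have hff := two_ty G.L f
          rcases short_cg G.L hc (by omega) (by omega) with h | h | h
          · rw [h]; omega
          · rw [h, ip_neg_left]; omega
          · omega
        have q1 := q _ hs hc
        have q2 := q _ hg1 hgf
        rw [ip_sub_left, ip_smul_left, h5] at q1
        omega
      have k1 := key g hg1 hgf
      have k2 := key (-g) (by rw [ty_neg, hg1]) (cg_neg hgf)
      rw [ip_neg_left] at k2
      omega

lemma LNum.w36 (N : LNum B) {w : LV} (hw : ty B w = 6) (hK : Kt B 4 w) : cn B 3 6 w = 2576 := by
  have G := N.G
  obtain ⟨H, hH⟩ := hf_ex G hw hK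
  obtain ⟨f, hf1, hf2⟩ := id hK
  have h1 := flip_card G hH 3 11 (by norm_num)
  set Y := {b | ty B b = 3 ∧ ∃ g, ty B g = 4 ∧ cg g w ∧ pairZ B g b = 4} with hY
  have hall := par34 N hf1
  have hbd : ∀ b, ty B b = 3 → ∀ g, ty B g = 4 → -5 ≤ pairZ B g b ∧ pairZ B g b ≤ 5 := by
    intro b hb g hg
    obtain ⟨n1, n2⟩ := ne_of_ty hg hb (by norm_num)
    have := ip_le G.L hg hb n1
    have := ip_ge G.L hg hb n2
    omega
  have hU : {b | ty B b = 3 ∧ pairZ B b f % 2 = 0} = ZZ B w 3 ∪ Y := by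
    ext b
    simp only [Set.mem_union]
    constructor
    · rintro ⟨hb1, hb2⟩
      by_cases hy : b ∈ Y
      · exact Or.inr hy
      · left
        refine ⟨hb1, fun g hg1 hg2 => ?_⟩
        have he := fr_even G (cg_trans hg2 (cg_symm hf2)) hb2
        have := hbd b hb1 g hg1
        have k1 : pairZ B g b ≠ 4 := fun h => hy ⟨hb1, g, hg1, hg2, h⟩
        have k2 : pairZ B (-g) b ≠ 4 := fun h => hy ⟨hb1, -g, by rw [ty_neg, hg1], cg_neg hg2, h⟩
        rw [ip_neg_left] at k2
        omega
    · rintro (⟨hb1, hb2⟩ | ⟨hb1, g, hg1, hg2, hg⟩)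
      · have := hb2 f hf1 hf2
        exact ⟨hb1, by rw [ip_comm G.L]; omega⟩
      · refine ⟨hb1, ?_⟩
        have := fr_even G (cg_trans hf2 (cg_symm hg2)) (a := b) (by rw [ip_comm G.L]; omega)
        rw [ip_comm G.L]; exact this
  have hYf : Y.Finite := G.fn 3 _
  have hZf : (ZZ B w 3).Finite := G.fn 3 _
  rw [hU, Set.ncard_union_eq ?_ hZf hYf] at hall
  swap
  · rw [Set.disjoint_left]
    rintro b ⟨hb1, hb2⟩ ⟨_, g, hg1, hg2, hg⟩
    have := hb2 g hg1 hg2; omega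
  have hYc := dc (X := Y) (Y := {f | ty B f = 4 ∧ cg f w}) hYf (G.fn 4 _)
    (fun a f => pairZ B f a = 4) (m := 1) (n := 64768) ?_ ?_
  · rw [fr48 G hK] at hYc
    push_cast at h1
    rw [h1] at hall
    omega
  · rintro b ⟨hb1, g, hg1, hg2, hg⟩
    rw [Set.ncard_eq_one]
    refine ⟨g, ?_⟩
    ext g'
    simp only [Set.mem_ofPred_eq, Set.mem_singleton_iff]
    constructor
    · rintro ⟨⟨k1, k2⟩, k3⟩
      have hc := cg_trans k2 (cg_symm hg2)
      rcases short_cg G.L hc (by omega) (by omega) with h | h | h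
      · exact h
      · rw [h, ip_neg_left] at k3; omega
      · exfalso
        obtain ⟨c, d, e1, e2, e3, e4, e5⟩ := cg_half G.L hc
        have hcb : 2 * pairZ B c b = 8 := by
          rw [← ip_smul_left, ← e1, ip_add_left]; omega
        have ht := ty_sub G.L c b
        have : c - b = 0 := ty_eq_zero G.L (by omega)
        rw [this, ty_zero] at ht
        omega
    · rintro rfl; exact ⟨⟨hg1, hg2⟩, hg⟩
  · rintro g ⟨hg1, hg2⟩
    rw [← N.V4 hg1, cn]
    congr 1; ext b
    simp only [Set.mem_ofPred_eq]
    rw [ip_comm G.L b g]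
    exact ⟨fun h => ⟨h.1.1, h.2⟩, fun h => ⟨⟨h.1, g, hg1, hg2, h.2⟩, h.2⟩⟩

lemma dcS (G : Good B) {X Z : Set LV} {x k : ℤ} (j : ℤ) {m p n : ℕ} (hX : X ⊆ Lam B x) (hZ : Z ⊆ Lam B x)
    (hd : Disjoint X Z) (hU : ∀ w, ty B w = x → w ∈ X ∨ w ∈ Z)
    (h1 : ∀ w ∈ X, cn B k j w = m) (h0 : ∀ w ∈ Z, cn B k j w = p)
    (h2 : ∀ a, ty B a = k → cn B x j a = n) :
    X.ncard * m + Z.ncard * p = (Lam B k).ncard * n := by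
  classical
  have hXf := (G.fin x).subset hX
  have hZf := (G.fin x).subset hZ
  have hF : (G.fin x).toFinset = hXf.toFinset ∪ hZf.toFinset := by
    ext w
    simp only [Set.Finite.mem_toFinset, Finset.mem_union]
    exact ⟨fun h => hU w h, fun h => h.elim (fun h => hX h) (fun h => hZ h)⟩
  have hdj : Disjoint hXf.toFinset hZf.toFinset := by
    rw [Set.Finite.disjoint_toFinset]; exact hd
  have e := Finset.sum_card_bipartiteAbove_eq_sum_card_bipartiteBelow
    (s := (G.fin x).toFinset) (t := (G.fin k).toFinset) (fun w a => pairZ B a w = j)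
  have c1 : ∀ w, (Finset.bipartiteAbove (fun w a => pairZ B a w = j) (G.fin k).toFinset w).card = cn B k j w := by
    intro w
    rw [cn, ← Set.ncard_coe_finset]; congr 1; ext a
    simp [Finset.bipartiteAbove, Lam]
  have c2 : ∀ a, (Finset.bipartiteBelow (fun w a => pairZ B a w = j) (G.fin x).toFinset a).card = cn B x j a := by
    intro a
    rw [cn, ← Set.ncard_coe_finset]; congr 1; ext w
    simp [Finset.bipartiteBelow, Lam, ip_comm G.L a w]
  rw [Finset.sum_congr rfl (fun w _ => c1 w), Finset.sum_congr rfl (fun w _ => c2 w), hF,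
    Finset.sum_union hdj, Finset.sum_congr rfl (fun w hw => h1 w (by simpa using hw)),
    Finset.sum_congr (s₁ := hZf.toFinset) rfl (fun w hw => h0 w (by simpa using hw)),
    Finset.sum_congr rfl (fun a ha => h2 a (by simpa [Lam] using ha)), Finset.sum_const, Finset.sum_const,
    Finset.sum_const, card_fin G, ← Set.ncard_eq_toFinset_card _ hXf, ← Set.ncard_eq_toFinset_card _ hZf] at e
  exact e

lemma Orb.ne_of {O O' : Set LV} {k k' : ℤ} {c c' : ℕ} (h : Orb B O k c) (h' : Orb B O' k' c') (hc : c ≠ c') :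
    ∀ w ∈ O, w ∉ O' := by
  intro w h1 h2
  have := h.uniq O' h'.orb ⟨w, h1, h2⟩
  apply hc
  rw [← h.card, ← h'.card, this]

lemma LNum.o6a (N : LNum B) {O : Set LV} (h : Orb B O 6 (518400 * 65520)) : O = SK B 6 4 :=
  eq_of_card N.G (SK_sub 6 4) (fun w hw => ⟨h.sub hw, O6a_K N.G h w hw⟩) (by rw [h.card, N.S6a])

lemma LNum.o6b (N : LNum B) {O O' : Set LV} (h : Orb B O 6 (518400 * 65520))
    (h' : Orb B O' 6 (6900 * 65520)) : O' = SK B 6 2 := by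
  refine eq_of_card N.G (SK_sub 6 2) (fun w hw => ⟨h'.sub hw, ?_⟩) (by rw [h'.card, N.S6b])
  rcases k_6 N.G (h'.sub hw) with hk | hk
  · exact hk
  · exact absurd (by rw [N.o6a h]; exact ⟨h'.sub hw, hk⟩) (h'.ne_of h (by norm_num) w hw)

lemma LNum.w6b (N : LNum B) {O O' : Set LV} (h : Orb B O 6 (518400 * 65520))
    (h' : Orb B O' 6 (6900 * 65520)) : ∀ w ∈ O', cn B 2 4 w = 891 ∧ cn B 3 6 w = 2816 := by
  intro w hw
  have G := N.G
  have hU : ∀ w, ty B w = 6 → w ∈ O ∨ w ∈ O' := by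
    intro w hw
    rw [N.o6a h, N.o6b h h']
    rcases k_6 G hw with hk | hk
    · exact Or.inr ⟨hw, hk⟩
    · exact Or.inl ⟨hw, hk⟩
  have hd : Disjoint O O' := Set.disjoint_left.mpr (h.ne_of h' (by norm_num))
  have e1 := dcS G (k := 2) 4 (m := 759) (n := 133204500) h.sub h'.sub hd hU
    (fun w hw => by rw [N.o6a h] at hw; exact N.w24 hw.1 hw.2) (h'.cn hw rfl)
    (fun a ha => by
      rw [cn_refl G.L ha 6 4 4 0 (by norm_num) (by norm_num), N.c40 ha])
  have e2 := dcS G (k := 3) 6 (m := 2576) (n := 5292300) h.sub h'.sub hd hU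
    (fun w hw => by rw [N.o6a h] at hw; exact N.w36 hw.1 hw.2) (h'.cn hw rfl)
    (fun a ha => by
      rw [cn_refl G.L ha 6 6 3 0 (by norm_num) (by norm_num), (N.U ha).1])
  rw [h.card, h'.card, G.n2] at e1
  rw [h.card, h'.card, G.n3] at e2
  omega

end six

section nine
variable {B : Matrix (Fin 24) (Fin 24) ℤ}

lemma iso_conway (hB : IsLeech B) {e : LV ≃+ LV} (he : IsIso B e) :
    ∃ σ ∈ ConwayGroup B, ∀ v, e v = σ *ᵥ v := by
  have h1 : ∀ v, e v = LinearMap.toMatrix' (e.toAddMonoidHom.toIntLinearMap) *ᵥ v := by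
    intro v; rw [LinearMap.toMatrix'_mulVec]; rfl
  generalize LinearMap.toMatrix' (e.toAddMonoidHom.toIntLinearMap) = σ at h1
  have h2 : σᵀ * B * σ = B := by
    ext i j
    have h := he (Pi.single i 1) (Pi.single j 1)
    rw [h1, h1] at h
    unfold pairZ at h
    rw [Matrix.mulVec_mulVec, ← vecMul_transpose, ← dotProduct_mulVec, Matrix.mulVec_mulVec,
      ← Matrix.mul_assoc] at h
    simpa using h
  refine ⟨σ, ⟨?_, h2⟩, h1⟩
  have h3 := congrArg det h2
  rw [det_mul, det_mul, hB.2.1, mul_one] at h3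
  exact IsUnit.of_mul_eq_one_right _ h3

lemma Orb.iso {O : Set LV} {k : ℤ} {c : ℕ} (h : Orb B O k c) (hB : IsLeech B) {e : LV ≃+ LV}
    (he : IsIso B e) {u : LV} (hu : u ∈ O) : e u ∈ O := by
  obtain ⟨σ, hσ, h1⟩ := iso_conway hB he
  obtain ⟨v, rfl⟩ := h.orb
  obtain ⟨ρ, hρ, rfl⟩ := hu
  exact ⟨σ * ρ, conway_mul hσ hρ, by rw [h1, Matrix.mulVec_mulVec]⟩

lemma d9 (G : Good B) {w : LV} (hw : ty B w = 9) :
    (cn B 2 7 w = 1 ∧ cn B 3 9 w = 0) ∨ (cn B 2 7 w = 0 ∧ cn B 3 9 w = 2) := by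
  obtain ⟨s, h1, h2⟩ := kt_odd G hw (y := 4) (by norm_num)
  obtain ⟨n1, n2⟩ := ne_of_ty h1 hw (by norm_num)
  obtain ⟨α, β, a1, a2, a3, a4⟩ := half_cases G.L h2 n1 n2
  rw [cn_fc G.L hw 2 7 3 (-4) (by norm_num) (by norm_num), fc_neg,
    cn_fc G.L hw 3 9 3 0 (by norm_num) (by norm_num)]
  have h3 : pairZ B s w = 0 ∨ (pairZ B s w = 4 ∨ pairZ B s w = -4) := by omega
  rcases h3 with h3 | h3
  · right
    exact ⟨fc_zero G.L (by norm_num) h1 h2 (by omega) (by omega),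
      fc_two G.L (by norm_num) h1 h2 (by norm_num) h3⟩
  · left
    exact ⟨fc_one G.L (by norm_num) h1 h2 (by norm_num) h3,
      fc_zero G.L (by norm_num) h1 h2 (by omega) (by omega)⟩

lemma LNum.S9a (N : LNum B) : {w | ty B w = 9 ∧ cn B 2 7 w = 1}.ncard = 12441600 * 65520 := by
  have := dcX N.G (k := 2) (x := 9) 7 (m := 1) (n := 4147200) (X := {w | ty B w = 9 ∧ cn B 2 7 w = 1})
    (fun w h => h.1) (fun w hw => hw.2) ?_ (fun a ha => by
      rw [cn_refl N.G.L ha 9 7 4 (-3) (by norm_num) (by norm_num), cn_neg, N.c43 ha])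
  · rw [N.G.n2] at this; omega
  · intro w h1 h2
    rcases d9 N.G h1 with h | h
    · exact absurd ⟨h1, h.1⟩ h2
    · exact h.1

lemma LNum.S9b (N : LNum B) : {w | ty B w = 9 ∧ cn B 3 9 w = 2}.ncard = 32972800 * 65520 := by
  have := dcX N.G (k := 3) (x := 9) 9 (m := 2) (n := 257600) (X := {w | ty B w = 9 ∧ cn B 3 9 w = 2})
    (fun w h => h.1) (fun w hw => hw.2) ?_ (fun a ha => by
      rw [cn_refl N.G.L ha 9 9 3 (-3) (by norm_num) (by norm_num), cn_neg, (N.U ha).2.2])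
  · rw [N.G.n3] at this; omega
  · intro w h1 h2
    rcases d9 N.G h1 with h | h
    · exact h.2
    · exact absurd ⟨h1, h.2⟩ h2

lemma LNum.o9b (N : LNum B) {O : Set LV} (h : Orb B O 9 (32972800 * 65520)) :
    O = {w | ty B w = 9 ∧ cn B 3 9 w = 2} := by
  obtain ⟨u, hu⟩ := h.ne
  rcases d9 N.G (h.sub hu) with hk | hk
  · exfalso
    have := Set.ncard_le_ncard (s := O) (t := {w | ty B w = 9 ∧ cn B 2 7 w = 1})
      (fun w hw => ⟨h.sub hw, h.cn hu hk.1 w hw⟩) (N.G.fn 9 _)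
    rw [h.card, N.S9a] at this
    norm_num at this
  · exact eq_of_card N.G (x := 9) (fun w h => h.1) (fun w hw => ⟨h.sub hw, h.cn hu hk.2 w hw⟩)
      (by rw [h.card, N.S9b])

lemma LNum.o9a (N : LNum B) {O O' : Set LV} (h : Orb B O 9 (32972800 * 65520))
    (h' : Orb B O' 9 (12441600 * 65520)) :
    O' = {w | ty B w = 9 ∧ cn B 2 7 w = 1} := by
  refine eq_of_card N.G (x := 9) (fun w h => h.1) (fun w hw => ⟨h'.sub hw, ?_⟩)
      (by rw [h'.card, N.S9a])
  rcases d9 N.G (h'.sub hw) with hk | hk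
  · exact hk.1
  · exact absurd (by rw [N.o9b h]; exact ⟨h'.sub hw, hk.2⟩) (h'.ne_of h (by norm_num) w hw)

lemma d10 (G : Good B) {w : LV} (hw : ty B w = 10) :
    (cn B 2 8 w = 1 ∧ cn B 3 10 w = 0) ∨ (cn B 2 8 w = 0 ∧ cn B 3 10 w = 2) ∨
      (cn B 2 8 w = 0 ∧ cn B 3 10 w = 0 ∧ Kt B 4 w) := by
  rw [cn_fc G.L hw 2 8 2 (-4) (by norm_num) (by norm_num), fc_neg,
    cn_fc G.L hw 3 10 2 0 (by norm_num) (by norm_num)]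
  rcases kt_even G hw (y := 5) (by norm_num) with h | ⟨s, h1, h2⟩ | h
  · obtain ⟨u, _, hu⟩ := kt_zero G.L h; omega
  · obtain ⟨n1, n2⟩ := ne_of_ty h1 hw (by norm_num)
    obtain ⟨α, β, a1, a2, a3, a4⟩ := half_cases G.L h2 n1 n2
    have h3 : pairZ B s w = 0 ∨ (pairZ B s w = 4 ∨ pairZ B s w = -4) := by omega
    rcases h3 with h3 | h3
    · right; left
      exact ⟨fc_zero G.L (by norm_num) h1 h2 (by omega) (by omega),
        fc_two G.L (by norm_num) h1 h2 (by norm_num) h3⟩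
    · left
      exact ⟨fc_one G.L (by norm_num) h1 h2 (by norm_num) h3,
        fc_zero G.L (by norm_num) h1 h2 (by omega) (by omega)⟩
  · right; right
    exact ⟨fc_empty G.L h (by norm_num) (by norm_num) (by norm_num) _ _,
      fc_empty G.L h (by norm_num) (by norm_num) (by norm_num) _ _, h⟩

lemma LNum.S10b (N : LNum B) : {w | ty B w = 10 ∧ cn B 2 8 w = 1}.ncard = 279450 * 65520 := by
  have := dcX N.G (k := 2) (x := 10) 8 (m := 1) (n := 93150) (X := {w | ty B w = 10 ∧ cn B 2 8 w = 1})
    (fun w h => h.1) (fun w hw => hw.2) ?_ (fun a ha => by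
      rw [cn_refl N.G.L ha 10 8 4 (-4) (by norm_num) (by norm_num), cn_neg, N.c44 ha])
  · rw [N.G.n2] at this; omega
  · intro w h1 h2
    rcases d10 N.G h1 with h | h | h
    · exact absurd ⟨h1, h.1⟩ h2
    · exact h.1
    · exact h.1

lemma LNum.S10c (N : LNum B) : {w | ty B w = 10 ∧ cn B 3 10 w = 2}.ncard = 1430784 * 65520 := by
  have := dcX N.G (k := 3) (x := 10) 10 (m := 2) (n := 11178) (X := {w | ty B w = 10 ∧ cn B 3 10 w = 2})
    (fun w h => h.1) (fun w hw => hw.2) ?_ (fun a ha => by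
      rw [cn_refl N.G.L ha 10 10 3 (-4) (by norm_num) (by norm_num), cn_neg, N.U4 ha])
  · rw [N.G.n3] at this; omega
  · intro w h1 h2
    rcases d10 N.G h1 with h | h | h
    · exact h.2
    · exact absurd ⟨h1, h.2⟩ h2
    · exact h.2.1

/-- the relation between type 10 vectors and type 6 vectors -/
def R10 (B : Matrix (Fin 24) (Fin 24) ℤ) (w v : LV) : Prop :=
  ∃ f g, f ≠ g ∧ (ty B f = 4 ∧ cg f w ∧ pairZ B f w = 6) ∧ (ty B g = 4 ∧ cg g w ∧ pairZ B g w = 6) ∧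
    w = v + f + g

lemma R10_iso {e : LV ≃+ LV} (he : IsIso B e) {w v : LV} (h : R10 B w v) : R10 B (e w) (e v) := by
  obtain ⟨f, g, h0, ⟨h1, h2, h3⟩, ⟨k1, k2, k3⟩, h4⟩ := h
  exact ⟨e f, e g, fun h => h0 (e.injective h), ⟨by rw [iso_ty he, h1], iso_cg.mpr h2, by rw [he, h3]⟩,
    ⟨by rw [iso_ty he, k1], iso_cg.mpr k2, by rw [he, k3]⟩, by rw [← map_add, ← map_add, ← h4]⟩

lemma iso_symm {e : LV ≃+ LV} (he : IsIso B e) : IsIso B e.symm := by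
  intro x y
  rw [← he]; simp

lemma LNum.div10 (N : LNum B) {O O6 : Set LV} {c : ℕ} (h6 : Orb B O6 6 (518400 * 65520))
    (h : Orb B O 10 c) (hK : ∀ w ∈ O, Kt B 4 w) : 518400 * 65520 ∣ c := by
  have G := N.G
  obtain ⟨v0, hv0⟩ := h6.ne
  have hfin : O.Finite := (G.fin 10).subset h.sub
  have hfin6 : O6.Finite := (G.fin 6).subset h6.sub
  have := dc hfin hfin6 (R10 B) (m := 1) (n := {w | w ∈ O ∧ R10 B w v0}.ncard) ?_ ?_
  · rw [h.card, h6.card, mul_one] at this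
    exact ⟨_, this⟩
  · intro w hw
    have hw10 : ty B w = 10 := h.sub hw
    have h2 := (s10a G hw10 (hK w hw)).2
    rw [fc, Set.ncard_eq_two] at h2
    obtain ⟨f, g, hne, hfg⟩ := h2
    have hf : f ∈ {s | ty B s = 4 ∧ cg s w ∧ pairZ B s w = 6} := by rw [hfg]; simp
    have hg : g ∈ {s | ty B s = 4 ∧ cg s w ∧ pairZ B s w = 6} := by rw [hfg]; simp
    obtain ⟨f1, f2, f3⟩ := hf
    obtain ⟨g1, g2, g3⟩ := hg
    have hc := cg_trans f2 (cg_symm g2)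
    have ho : pairZ B f g = 0 := by
      refine fr_orth G.L f1 g1 hc hne ?_
      rintro rfl
      rw [ip_neg_left] at f3; omega
    have hv : w - (f + g) ∈ O6 := by
      rw [N.o6a h6]
      constructor
      · rw [ty_sub G.L, ty_add G.L, ip_add_right, ip_comm G.L w f, ip_comm G.L w g]; omega
      · refine ⟨f, f1, cg_trans f2 ?_⟩
        obtain ⟨a, b, e1, _⟩ := cg_half G.L hc
        exact ⟨a, by rw [e1]; simp⟩
    rw [Set.ncard_eq_one]
    refine ⟨w - (f + g), ?_⟩
    ext v
    simp only [Set.mem_ofPred_eq, Set.mem_singleton_iff]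
    constructor
    · rintro ⟨_, f', g', hne', hf', hg', he⟩
      have k1 : f' ∈ ({f, g} : Set LV) := by rw [← hfg]; exact hf'
      have k2 : g' ∈ ({f, g} : Set LV) := by rw [← hfg]; exact hg'
      have hs : f' + g' = f + g := by
        rcases k1 with k1 | k1 <;> rcases k2 with k2 | k2
        · exact absurd (k1.trans k2.symm) hne'
        · rw [k1, k2]
        · rw [k1, k2, add_comm]
        · exact absurd (k1.trans k2.symm) hne'
      rw [← hs, he]; abel
    · rintro rfl
      exact ⟨hv, f, g, hne, ⟨f1, f2, f3⟩, ⟨g1, g2, g3⟩, by abel⟩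
  · intro v hv
    obtain ⟨e, he, rfl⟩ := h6.tr v0 hv0 v hv
    symm
    refine ncard_bij (fun a => e a) (fun a => e.symm a) ?_ ?_ (by simp) (by simp)
    · rintro w ⟨h1, h2⟩; exact ⟨h.iso G.L he h1, R10_iso he h2⟩
    · rintro w ⟨h1, h2⟩
      refine ⟨h.iso G.L (iso_symm he) h1, ?_⟩
      have := R10_iso (iso_symm he) h2
      simpa using this

lemma LNum.o10c (N : LNum B) {O O6 : Set LV} (h6 : Orb B O6 6 (518400 * 65520))
    (h : Orb B O 10 (1430784 * 65520)) :
    O = {w | ty B w = 10 ∧ cn B 3 10 w = 2} := by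
  obtain ⟨u, hu⟩ := h.ne
  rcases d10 N.G (h.sub hu) with hk | hk | hk
  · exfalso
    have := Set.ncard_le_ncard (s := O) (t := {w | ty B w = 10 ∧ cn B 2 8 w = 1})
      (fun w hw => ⟨h.sub hw, h.cn hu hk.1 w hw⟩) (N.G.fn 10 _)
    rw [h.card, N.S10b] at this
    norm_num at this
  · exact eq_of_card N.G (x := 10) (fun w h => h.1) (fun w hw => ⟨h.sub hw, h.cn hu hk.2 w hw⟩)
      (by rw [h.card, N.S10c])
  · have := N.div10 h6 h (h.kt hu hk.2.2)
    norm_num at this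

lemma LNum.o10b (N : LNum B) {O O' O6 : Set LV} (h6 : Orb B O6 6 (518400 * 65520))
    (h : Orb B O 10 (1430784 * 65520)) (h' : Orb B O' 10 (279450 * 65520)) :
    O' = {w | ty B w = 10 ∧ cn B 2 8 w = 1} := by
  refine eq_of_card N.G (x := 10) (fun w h => h.1) (fun w hw => ⟨h'.sub hw, ?_⟩)
      (by rw [h'.card, N.S10b])
  rcases d10 N.G (h'.sub hw) with hk | hk | hk
  · exact hk.1
  · exact absurd (by rw [N.o10c h6 h]; exact ⟨h'.sub hw, hk.2⟩) (h'.ne_of h (by norm_num) w hw)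
  · have := N.div10 h6 h' (h'.kt hw hk.2.2)
    norm_num at this

lemma LNum.o8b (N : LNum B) {O : Set LV} (h : Orb B O 8 (12295800 * 65520)) : O = SK B 8 4 :=
  eq_of_card N.G (SK_sub 8 4) (fun w hw => ⟨h.sub hw, O8b_K N.G h w hw⟩) (by rw [h.card, N.S8b])

lemma LNum.o5 (N : LNum B) {O : Set LV} (h : Orb B O 5 (70656 * 65520)) : O = Lam B 5 :=
  eq_of_card N.G (le_refl _) h.sub (by rw [h.card, N.S5])

lemma LNum.o7 (N : LNum B) {O : Set LV} (h : Orb B O 7 (2861568 * 65520)) : O = Lam B 7 :=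
  eq_of_card N.G (le_refl _) h.sub (by rw [h.card, N.S7])

lemma LNum.w5 (N : LNum B) {O : Set LV} (h : Orb B O 5 (70656 * 65520)) :
    ∀ w, ty B w = 5 → cn B 2 3 w = 4050 ∧ cn B 3 5 w = 14256 := by
  intro w hw
  have G := N.G
  have hO := N.o5 h
  have hwO : w ∈ O := by rw [hO]; exact hw
  have e1 := dcL G (x := 5) (k := 2) 3 (n := 95385600) (fun u hu => h.cn hwO rfl u (by rw [hO]; exact hu))
    (fun a ha => by rw [cn_refl G.L ha 5 3 4 1 (by norm_num) (by norm_num), N.c41 ha])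
  have e2 := dcL G (x := 5) (k := 3) 5 (n := 3934656) (fun u hu => h.cn hwO rfl u (by rw [hO]; exact hu))
    (fun a ha => by rw [cn_refl G.L ha 5 5 3 1 (by norm_num) (by norm_num), (N.U ha).2.1])
  rw [N.S5, G.n2] at e1
  rw [N.S5, G.n3] at e2
  omega

lemma LNum.w7 (N : LNum B) {O : Set LV} (h : Orb B O 7 (2861568 * 65520)) :
    ∀ w, ty B w = 7 → cn B 2 5 w = 100 ∧ cn B 3 7 w = 352 := by
  intro w hw
  have G := N.G
  have hO := N.o7 h
  have hwO : w ∈ O := by rw [hO]; exact hw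
  have e1 := dcL G (x := 7) (k := 2) 5 (n := 95385600) (fun u hu => h.cn hwO rfl u (by rw [hO]; exact hu))
    (fun a ha => by rw [cn_refl G.L ha 7 5 4 (-1) (by norm_num) (by norm_num), cn_neg, N.c41 ha])
  have e2 := dcL G (x := 7) (k := 3) 7 (n := 3934656) (fun u hu => h.cn hwO rfl u (by rw [hO]; exact hu))
    (fun a ha => by rw [cn_refl G.L ha 7 7 3 (-1) (by norm_num) (by norm_num), cn_neg, (N.U ha).2.1])
  rw [N.S7, G.n2] at e1
  rw [N.S7, G.n3] at e2
  omega

lemma pairs_cn (hB : IsLeech B) (k l j : ℤ) (w : LV) (hj : j = k + ty B w - l) :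
    Nat.card {p : LV × LV // p.1 ∈ Lam B k ∧ p.2 ∈ Lam B l ∧ p.1 + p.2 = w} = cn B k j w := by
  change Nat.card ({p : LV × LV | p.1 ∈ Lam B k ∧ p.2 ∈ Lam B l ∧ p.1 + p.2 = w} : Set _) = _
  rw [Nat.card_coe_set_eq]
  refine ncard_bij (fun p => p.1) (fun a => (a, w - a)) ?_ ?_ ?_ (by simp)
  · rintro ⟨a, b⟩ ⟨h1, h2, h3⟩
    refine ⟨h1, ?_⟩
    have : b = w - a := by rw [← h3]; simp
    have h4 : ty B b = l := h2
    rw [this, ty_sub hB, ip_comm hB] at h4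
    have h5 : ty B a = k := h1
    dsimp only
    omega
  · rintro a ⟨h1, h2⟩
    refine ⟨h1, ?_, by simp⟩
    change ty B (w - a) = l
    rw [ty_sub hB, ip_comm hB]; omega
  · rintro ⟨a, b⟩ ⟨h1, h2, h3⟩
    simp only [Prod.mk.injEq, true_and]
    rw [← h3]; simp

lemma pairs_zero (k l : ℤ) (w : LV) (h : ∀ a b, ty B a = k → ty B b = l → a + b ≠ w) :
    Nat.card {p : LV × LV // p.1 ∈ Lam B k ∧ p.2 ∈ Lam B l ∧ p.1 + p.2 = w} = 0 := by
  rw [Nat.card_eq_zero]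
  left
  exact ⟨fun p => h _ _ p.2.1 p.2.2.1 p.2.2.2⟩

end nine

lemma ite_step {p : Prop} [Decidable p] {n x y : ℕ} (h1 : p → n = x) (h2 : ¬p → n = y) :
    n = if p then x else y := by
  split
  · exact h1 ‹_›
  · exact h2 ‹_›

open scoped Classical in
/-- The decompositions of the Conway orbit products `O₂ ⊗ O₄` and `O₃ ⊗ O₃`: for every
`w ∈ Λ`, the number of ordered pairs `(a,b) ∈ O₂ × O₄` with `a + b = w` is as listed, and
likewise for `O₃ × O₃`. -/
theorem orbit_product_O2O4_and_O3O3
    (B : Matrix (Fin 24) (Fin 24) ℤ) (hB : IsLeech B)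
    (O2 O3 O4 O5 O6a O6b O7 O8b O9a O9b O10b O10c O12a : Set LV)
    (h2 : OrbitData B O2 2 (3 * 65520)) (h3 : OrbitData B O3 3 (256 * 65520))
    (h4 : OrbitData B O4 4 (6075 * 65520)) (h5 : OrbitData B O5 5 (70656 * 65520))
    (h6a : OrbitData B O6a 6 (518400 * 65520)) (h6b : OrbitData B O6b 6 (6900 * 65520))
    (h7 : OrbitData B O7 7 (2861568 * 65520)) (h8b : OrbitData B O8b 8 (12295800 * 65520))
    (h9a : OrbitData B O9a 9 (12441600 * 65520)) (h9b : OrbitData B O9b 9 (32972800 * 65520))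
    (h10b : OrbitData B O10b 10 (279450 * 65520)) (h10c : OrbitData B O10c 10 (1430784 * 65520))
    (h12a : OrbitData B O12a 12 (256 * 65520))
    (h12adbl : O12a = {u : LV | ∃ v ∈ O3, u = (2 : ℤ) • v}) :
    (∀ w : LV,
      Nat.card {p : LV × LV // p.1 ∈ O2 ∧ p.2 ∈ O4 ∧ p.1 + p.2 = w} =
        if w ∈ O2 then 93150 else if w ∈ O3 then 48600 else if w ∈ O4 then 16192
        else if w ∈ O5 then 4050 else if w ∈ O6a then 759 else if w ∈ O6b then 891
        else if w ∈ O7 then 100 else if w ∈ O8b then 8 else if w ∈ O9a then 1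
        else if w ∈ O10b then 1 else 0) ∧
    (∀ w : LV,
      Nat.card {p : LV × LV // p.1 ∈ O3 ∧ p.2 ∈ O3 ∧ p.1 + p.2 = w} =
        if w = 0 then 16773120 else if w ∈ O2 then 953856 else if w ∈ O3 then 257600
        else if w ∈ O4 then 64768 else if w ∈ O5 then 14256 else if w ∈ O6a then 2576
        else if w ∈ O6b then 2816 else if w ∈ O7 then 352 else if w ∈ O8b then 32
        else if w ∈ O9b then 2 else if w ∈ O10c then 2 else if w ∈ O12a then 1 else 0) := by
  have H2 : Orb B O2 2 (3 * 65520) := orb_of h2 hB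
  have H3 : Orb B O3 3 (256 * 65520) := orb_of h3 hB
  have H4 : Orb B O4 4 (6075 * 65520) := orb_of h4 hB
  have H5 : Orb B O5 5 (70656 * 65520) := orb_of h5 hB
  have H6a : Orb B O6a 6 (518400 * 65520) := orb_of h6a hB
  have H6b : Orb B O6b 6 (6900 * 65520) := orb_of h6b hB
  have H7 : Orb B O7 7 (2861568 * 65520) := orb_of h7 hB
  have H8b : Orb B O8b 8 (12295800 * 65520) := orb_of h8b hB
  have H9a : Orb B O9a 9 (12441600 * 65520) := orb_of h9a hB
  have H9b : Orb B O9b 9 (32972800 * 65520) := orb_of h9b hB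
  have H10b : Orb B O10b 10 (279450 * 65520) := orb_of h10b hB
  have H10c : Orb B O10c 10 (1430784 * 65520) := orb_of h10c hB
  obtain ⟨G, e2, e3, e4⟩ := good_of hB H2 H3 H4
  have N : LNum B := ⟨G, fun f hf => (Mvals G H6a H8b hf).1, fun f hf => (Mvals G H6a H8b hf).2.1,
    fun f hf => (Mvals G H6a H8b hf).2.2.1, fun f hf => (Mvals G H6a H8b hf).2.2.2⟩
  have e5 := N.o5 H5
  have e6a := N.o6a H6a
  have e6b := N.o6b H6a H6b
  have e7 := N.o7 H7
  have e8b := N.o8b H8b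
  have e9b := N.o9b H9b
  have e9a := N.o9a H9b H9a
  have e10c := N.o10c H6a H10c
  have e10b := N.o10b H6a H10c H10b
  have w6b := N.w6b H6a H6b
  have w5 := N.w5 H5
  have w7 := N.w7 H7
  have n6 : ∀ w, w ∉ O6a → w ∉ O6b → ty B w ≠ 6 := by
    intro w c1 c2 hw
    rw [e6a] at c1; rw [e6b] at c2
    rcases k_6 G hw with h | h
    · exact c2 ⟨hw, h⟩
    · exact c1 ⟨hw, h⟩
  have n8 : ∀ w, ty B w = 8 → w ∉ O8b → cn B 2 6 w = 0 ∧ cn B 3 8 w = 0 := by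
    intro w hw hn
    rw [e8b] at hn
    rw [cn_fc hB hw 2 6 4 (-4) (by norm_num) (by norm_num),
      cn_fc hB hw 3 8 4 0 (by norm_num) (by norm_num)]
    exact ⟨z8 G hw (fun h => hn ⟨hw, h⟩) _, z8 G hw (fun h => hn ⟨hw, h⟩) _⟩
  obtain ⟨a2, ha2⟩ := ex2 G
  obtain ⟨f4, hf4⟩ := ex4 G
  rw [← e2, ← e3, ← e4]
  constructor
  · intro w
    refine ite_step (fun c2 => ?_) (fun c2 => ?_)
    · have c : ty B w = 2 := c2
      rw [pairs_cn hB 2 4 0 w (by omega)]; exact (N.n22 c).1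
    refine ite_step (fun c3 => ?_) (fun c3 => ?_)
    · have c : ty B w = 3 := c3
      rw [pairs_cn hB 2 4 1 w (by omega)]
      have h1 := e23 G 1 ha2 c
      have h2 := (N.n32 ha2).1
      omega
    refine ite_step (fun c4 => ?_) (fun c4 => ?_)
    · have c : ty B w = 4 := c4
      rw [pairs_cn hB 2 4 2 w (by omega)]; exact N.M2 w c
    refine ite_step (fun c5 => ?_) (fun c5 => ?_)
    · have c : ty B w = 5 := H5.sub c5
      rw [pairs_cn hB 2 4 3 w (by omega)]; exact (w5 w c).1
    refine ite_step (fun c6a => ?_) (fun c6a => ?_)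
    · have c : ty B w = 6 := H6a.sub c6a
      rw [e6a] at c6a
      rw [pairs_cn hB 2 4 4 w (by omega)]; exact N.w24 c c6a.2
    refine ite_step (fun c6b => ?_) (fun c6b => ?_)
    · have c : ty B w = 6 := H6b.sub c6b
      rw [pairs_cn hB 2 4 4 w (by omega)]; exact (w6b w c6b).1
    refine ite_step (fun c7 => ?_) (fun c7 => ?_)
    · have c : ty B w = 7 := H7.sub c7
      rw [pairs_cn hB 2 4 5 w (by omega)]; exact (w7 w c).1
    refine ite_step (fun c8 => ?_) (fun c8 => ?_)
    · have c : ty B w = 8 := H8b.sub c8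
      rw [e8b] at c8
      rw [pairs_cn hB 2 4 6 w (by omega)]; exact (k4_8 G c c8.2).1
    refine ite_step (fun c9 => ?_) (fun c9 => ?_)
    · have c : ty B w = 9 := H9a.sub c9
      rw [e9a] at c9
      rw [pairs_cn hB 2 4 7 w (by omega)]; exact c9.2
    refine ite_step (fun c10 => ?_) (fun c10 => ?_)
    · have c : ty B w = 10 := H10b.sub c10
      rw [e10b] at c10
      rw [pairs_cn hB 2 4 8 w (by omega)]; exact c10.2
    · by_cases t8 : ty B w = 8
      · rw [pairs_cn hB 2 4 6 w (by omega)]; exact (n8 w t8 c8).1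
      by_cases t9 : ty B w = 9
      · rw [pairs_cn hB 2 4 7 w (by omega)]
        rw [e9a] at c9
        rcases d9 G t9 with h | h
        · exact absurd ⟨t9, h.1⟩ c9
        · exact h.1
      by_cases t10 : ty B w = 10
      · rw [pairs_cn hB 2 4 8 w (by omega)]
        rw [e10b] at c10
        rcases d10 G t10 with h | h | h
        · exact absurd ⟨t10, h.1⟩ c10
        · exact h.1
        · exact h.1
      refine pairs_zero 2 4 w fun a b ha hb hab => ?_
      have h1 := ty_add hB a b
      have h2 := b2 hB ha hb (by norm_num)
      rw [hab] at h1
      have q2 : ty B w ≠ 2 := c2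
      have q3 : ty B w ≠ 3 := c3
      have q4 : ty B w ≠ 4 := c4
      have q5 : ty B w ≠ 5 := by rw [e5] at c5; exact c5
      have q7 : ty B w ≠ 7 := by rw [e7] at c7; exact c7
      have q6 := n6 w c6a c6b
      omega
  · intro w
    refine ite_step (fun c0 => ?_) (fun c0 => ?_)
    · have c : ty B w = 0 := by rw [c0, ty_zero]
      rw [pairs_cn hB 3 3 0 w (by omega), c0, ← G.n3, cn]
      congr 1; ext a
      simp only [Set.mem_ofPred_eq, ip_zero_right, and_true]; rfl
    refine ite_step (fun c2 => ?_) (fun c2 => ?_)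
    · have c : ty B w = 2 := c2
      rw [pairs_cn hB 3 3 2 w (by omega)]; exact (N.n32 c).2.1
    refine ite_step (fun c3 => ?_) (fun c3 => ?_)
    · have c : ty B w = 3 := c3
      rw [pairs_cn hB 3 3 3 w (by omega)]; exact (N.U c).2.2
    refine ite_step (fun c4 => ?_) (fun c4 => ?_)
    · have c : ty B w = 4 := c4
      rw [pairs_cn hB 3 3 4 w (by omega)]; exact N.V4 c
    refine ite_step (fun c5 => ?_) (fun c5 => ?_)
    · have c : ty B w = 5 := H5.sub c5
      rw [pairs_cn hB 3 3 5 w (by omega)]; exact (w5 w c).2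
    refine ite_step (fun c6a => ?_) (fun c6a => ?_)
    · have c : ty B w = 6 := H6a.sub c6a
      rw [e6a] at c6a
      rw [pairs_cn hB 3 3 6 w (by omega)]; exact N.w36 c c6a.2
    refine ite_step (fun c6b => ?_) (fun c6b => ?_)
    · have c : ty B w = 6 := H6b.sub c6b
      rw [pairs_cn hB 3 3 6 w (by omega)]; exact (w6b w c6b).2
    refine ite_step (fun c7 => ?_) (fun c7 => ?_)
    · have c : ty B w = 7 := H7.sub c7
      rw [pairs_cn hB 3 3 7 w (by omega)]; exact (w7 w c).2
    refine ite_step (fun c8 => ?_) (fun c8 => ?_)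
    · have c : ty B w = 8 := H8b.sub c8
      rw [e8b] at c8
      rw [pairs_cn hB 3 3 8 w (by omega)]; exact (k4_8 G c c8.2).2
    refine ite_step (fun c9 => ?_) (fun c9 => ?_)
    · have c : ty B w = 9 := H9b.sub c9
      rw [e9b] at c9
      rw [pairs_cn hB 3 3 9 w (by omega)]; exact c9.2
    refine ite_step (fun c10 => ?_) (fun c10 => ?_)
    · have c : ty B w = 10 := H10c.sub c10
      rw [e10c] at c10
      rw [pairs_cn hB 3 3 10 w (by omega)]; exact c10.2
    refine ite_step (fun c12 => ?_) (fun c12 => ?_)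
    · rw [h12adbl] at c12
      obtain ⟨v, hv, rfl⟩ := c12
      have hv3 : ty B v = 3 := H3.sub hv
      have c := ty_two hB v
      rw [pairs_cn hB 3 3 12 _ (by omega), ← cn_self hB (k := 3) (by norm_num) hv3, cn, cn]
      congr 1; ext a
      simp only [Set.mem_ofPred_eq, ip_smul_right]
      constructor <;> rintro ⟨h1, h2⟩ <;> exact ⟨h1, by omega⟩
    · by_cases t8 : ty B w = 8
      · rw [pairs_cn hB 3 3 8 w (by omega)]; exact (n8 w t8 c8).2
      by_cases t9 : ty B w = 9
      · rw [pairs_cn hB 3 3 9 w (by omega)]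
        rw [e9b] at c9
        rcases d9 G t9 with h | h
        · exact h.2
        · exact absurd ⟨t9, h.2⟩ c9
      by_cases t10 : ty B w = 10
      · rw [pairs_cn hB 3 3 10 w (by omega)]
        rw [e10c] at c10
        rcases d10 G t10 with h | h | h
        · exact h.2
        · exact absurd ⟨t10, h.2⟩ c10
        · exact h.2.1
      refine pairs_zero 3 3 w fun a b ha hb hab => ?_
      have h1 := ty_add hB a b
      rw [hab] at h1
      have q2 : ty B w ≠ 2 := c2
      have q3 : ty B w ≠ 3 := c3
      have q4 : ty B w ≠ 4 := c4
      have q5 : ty B w ≠ 5 := by rw [e5] at c5; exact c5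
      have q7 : ty B w ≠ 7 := by rw [e7] at c7; exact c7
      have q6 := n6 w c6a c6b
      by_cases k1 : a = b
      · apply c12
        rw [h12adbl]
        exact ⟨a, by rw [← e3]; exact ha, by rw [← hab, ← k1, two_smul]⟩
      by_cases k2 : a = -b
      · apply c0; rw [← hab, k2]; simp
      have h2 := ip_le hB ha hb k1
      have h3 := ip_ge hB ha hb k2
      omega

end
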